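/- arXiv:math/0703508 — 2 statements merged into one kernel-verified Lean document; each statement's English description precedes it below -/
import Mathlib

section
/- There is a constant C such that for all x ≥ 2, | Δ(x)/log x − Δ̃(x) − 2/(√x·(log x)²) | ≤ C/(√x·(log x)³). (That is, Δ(x)/log x − Δ̃(x) = 2/(√x (log x)²) + O(1/(√x (log x)³)).) -/
open Filter

/-- `Δ(x) = ∑_{p ≤ x} log p / (p-1) - ∑_{n ≤ x} Λ(n)/n`. -/
noncomputable def Delta (x : ℝ) : ℝ :=
  (∑ p ∈ (Finset.range (⌊x⌋₊ + 1)).filter Nat.Prime, Real.log p / ((p : ℝ) - 1)) -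
    ∑ n ∈ Finset.Icc 1 ⌊x⌋₊, ArithmeticFunction.vonMangoldt n / n

/-- `Δ̃(x) = ∑_{p ≤ x, a ≥ 1, p^a > x} 1/(a p^a)`. -/
noncomputable def hDelta (x : ℝ) : ℝ :=
  ∑ p ∈ (Finset.range (⌊x⌋₊ + 1)).filter Nat.Prime,
    ∑' a : ℕ, if 1 ≤ a ∧ x < (p : ℝ) ^ a then 1 / (a * (p : ℝ) ^ a) else 0

/-!
The left side is `∑_{p ≤ x} ∑_{p^a > x} p^{-a} (log p / log x - 1/a)`. The terms with `a ≥ 3`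
contribute `O(x^{-3/5})`, and those with `a = 2` equal `∑_{p ≤ x} K(p/√x) / (x log x)`, where
`K(u) = (log⁺ u) / u²` has Mellin transform `1/(2-s)²`. So, with `y = √x`, everything reduces to
`(log y)² ∑_p K(p/y) = y log y + O(y)`.

Instead of an error term in the prime number theorem one uses the weight `Λ(n) log n`, that is, the
derivative of the Dirichlet series: on `Re s = 1 + 1/(4 log y)` the Dirichlet series of
`(Λ(n) - 1) log n` is `O((1+t²)^{1/4})`, because `ζ` and its derivatives are `O(|t|^δ)` to the
right of `1` and `1/ζ` is controlled by the inequality `ζ(σ)³ |ζ(σ+it)|⁴ |ζ(σ+2·it)| ≥ 1`. The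
quadratic decay of the Mellin transform then gives `∑ (Λ(n) - 1) log n K(n/y) = O(y)`, while
`∑ log n K(n/y) = y log y + O(y)` is elementary. Passing from `Λ(n) log n` to `(log y)²` on primes
costs `O(y)` by Chebyshev's bound and the convergence of `∑ Λ(n) log n / n` over proper prime
powers.
-/

section Comparison

theorem norm_tsum_add_antideriv_le {E : Type*} [NormedAddCommGroup E] [CompleteSpace E]
    {h H : ℕ → E} {B : ℕ → ℝ} {N : ℕ} (hh : Summable h) (hH : Tendsto H atTop (nhds 0))
    (hB : Summable B) (hle : ∀ n, N ≤ n → ‖h n - (H (n + 1) - H n)‖ ≤ B n) :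
    ‖∑' n, h (n + N) + H N‖ ≤ ∑' n, B (n + N) := by
  have hh' : Summable fun n ↦ h (n + N) := (summable_nat_add_iff N).2 hh
  have htel : HasSum (fun n ↦ H (n + N + 1) - H (n + N)) (-H N) := by
    have hlim : Tendsto (fun n ↦ H (n + N)) atTop (nhds 0) := hH.comp (tendsto_add_atTop_nat N)
    have hbound : Summable fun n ↦ ‖h (n + N) - (H (n + N + 1) - H (n + N))‖ :=
      ((summable_nat_add_iff N).2 hB).of_nonneg_of_le (fun _ ↦ norm_nonneg _)
        fun n ↦ hle _ (by lia)
    have hsum : Summable fun n ↦ H (n + N + 1) - H (n + N) := by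
      simpa using hh'.sub hbound.of_norm
    have hpartial := Finset.sum_range_sub (fun n ↦ H (n + N))
    simp only [zero_add, add_right_comm _ 1 N] at hpartial
    refine (hsum.hasSum_iff_tendsto_nat).2 ?_
    simpa [hpartial] using hlim.sub_const (H N)
  have hdiff := hh'.hasSum.sub htel
  rw [sub_neg_eq_add] at hdiff
  rw [← hdiff.tsum_eq]
  exact tsum_of_norm_bounded ((summable_nat_add_iff N).2 hB).hasSum fun n ↦ hle _ (by lia)

theorem norm_deriv_sub_image_sub_le {E : Type*} [NormedAddCommGroup E] [NormedSpace ℝ E]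
    {H h k : ℝ → E} {a B : ℝ} (hH : ∀ x ∈ Set.Icc a (a + 1), HasDerivAt H (h x) x)
    (hh : ∀ x ∈ Set.Icc a (a + 1), HasDerivAt h (k x) x)
    (hB : ∀ x ∈ Set.Icc a (a + 1), ‖k x‖ ≤ B) :
    ‖h a - (H (a + 1) - H a)‖ ≤ B := by
  have hleft : a ∈ Set.Icc a (a + 1) := by simp
  have hright : a + 1 ∈ Set.Icc a (a + 1) := by simp
  have hB0 : 0 ≤ B := (norm_nonneg _).trans (hB a hleft)
  have hosc : ∀ x ∈ Set.Icc a (a + 1), ‖h x - h a‖ ≤ B := by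
    intro x hx
    refine ((convex_Icc a (a + 1)).norm_image_sub_le_of_norm_hasDerivWithin_le
      (fun y hy ↦ (hh y hy).hasDerivWithinAt) hB hleft hx).trans
      (mul_le_of_le_one_right hB0 ?_)
    rw [Real.norm_of_nonneg (sub_nonneg.2 hx.1)]
    linarith [hx.2]
  have hderiv : ∀ x ∈ Set.Icc a (a + 1),
      HasDerivWithinAt (fun x ↦ H x - x • h a) (h x - h a) (Set.Icc a (a + 1)) x := by
    intro x hx
    simpa [Pi.sub_def] using
      ((hH x hx).sub ((hasDerivAt_id x).smul_const (h a))).hasDerivWithinAt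
  have hmvt := (convex_Icc a (a + 1)).norm_image_sub_le_of_norm_hasDerivWithin_le hderiv hosc
    hleft hright
  rw [norm_sub_rev]
  convert hmvt using 1
  · congr 1
    simp only [add_smul, one_smul]
    abel
  · simp

theorem exists_log_pow_le_rpow (k : ℕ) {δ : ℝ} (hδ : 0 < δ) :
    ∃ C, 0 < C ∧ ∀ x : ℝ, 1 ≤ x → Real.log x ^ k ≤ C * x ^ δ := by
  have hk : (0 : ℝ) < k + 1 := by positivity
  refine ⟨((k + 1) / δ) ^ k, by positivity, fun x hx ↦ ?_⟩
  have hlog0 := Real.log_nonneg hx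
  have hlog := Real.log_le_rpow_div (by linarith : 0 ≤ x) (div_pos hδ hk)
  calc Real.log x ^ k ≤ (x ^ (δ / (k + 1)) / (δ / (k + 1))) ^ k := by gcongr
    _ = ((k + 1) / δ) ^ k * x ^ (δ / (k + 1) * k) := by
      rw [Real.rpow_mul (by linarith), Real.rpow_natCast, ← mul_pow]
      congr 1
      field_simp
    _ ≤ ((k + 1) / δ) ^ k * x ^ δ := by
      gcongr ?_ * ?_
      refine Real.rpow_le_rpow_of_exponent_le hx ?_
      rw [div_mul_eq_mul_div, div_le_iff₀ hk]
      nlinarith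

theorem hasDerivAt_ofReal_log {x : ℝ} (hx : 0 < x) :
    HasDerivAt (fun x : ℝ ↦ (Real.log x : ℂ)) (x : ℂ)⁻¹ x := by
  simpa using (Real.hasDerivAt_log hx.ne').ofReal_comp

theorem hasDerivAt_ofReal_cpow (s : ℂ) {x : ℝ} (hx : 0 < x) :
    HasDerivAt (fun x : ℝ ↦ (x : ℂ) ^ s) (s * (x : ℂ) ^ (s - 1)) x := by
  by_cases hs : s = 0
  · subst hs; simpa using hasDerivAt_const x (1 : ℂ)
  have := hasDerivAt_ofReal_cpow_const' (x := x) hx.ne' (r := s - 1) (by simpa using hs)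
  simpa [hs, mul_div_cancel₀] using this.const_mul s

theorem hasDerivAt_log_pow_mul_cpow (k : ℕ) (s : ℂ) {x : ℝ} (hx : 0 < x) :
    HasDerivAt (fun x : ℝ ↦ (Real.log x : ℂ) ^ k * (x : ℂ) ^ s)
      (k * ((Real.log x : ℂ) ^ (k - 1) * (x : ℂ) ^ (s - 1)) +
        s * ((Real.log x : ℂ) ^ k * (x : ℂ) ^ (s - 1))) x := by
  refine (((hasDerivAt_ofReal_log hx).pow k).mul (hasDerivAt_ofReal_cpow s hx)).congr_deriv ?_
  rw [Complex.cpow_sub _ _ (by exact_mod_cast hx.ne'), Complex.cpow_one, Pi.pow_apply]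
  ring

theorem exists_norm_log_pow_mul_cpow_le (k : ℕ) {δ : ℝ} (hδ : 0 < δ) :
    ∃ C, 0 < C ∧ ∀ (s : ℂ) (x : ℝ), 1 ≤ x →
      ‖(Real.log x : ℂ) ^ k * (x : ℂ) ^ s‖ ≤ C * x ^ (s.re + δ) := by
  obtain ⟨C, hC, hlog⟩ := exists_log_pow_le_rpow k hδ
  refine ⟨C, hC, fun s x hx ↦ ?_⟩
  have hx0 : 0 < x := by linarith
  calc _ = Real.log x ^ k * x ^ s.re := by
        rw [norm_mul, norm_pow, Complex.norm_real, Real.norm_of_nonneg (Real.log_nonneg hx),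
          Complex.norm_cpow_eq_rpow_re_of_pos hx0]
    _ ≤ C * x ^ δ * x ^ s.re := by gcongr; exact hlog x hx
    _ = C * x ^ (s.re + δ) := by rw [mul_assoc, ← Real.rpow_add hx0, add_comm δ]

theorem tendsto_log_pow_mul_cpow (k : ℕ) {s : ℂ} (hs : s.re < 0) :
    Tendsto (fun x : ℝ ↦ (Real.log x : ℂ) ^ k * (x : ℂ) ^ s) atTop (nhds 0) := by
  obtain ⟨C, -, hC⟩ := exists_norm_log_pow_mul_cpow_le k (δ := -s.re / 2) (by linarith)
  have hlim : Tendsto (fun x : ℝ ↦ C * x ^ (-(-s.re / 2))) atTop (nhds 0) := by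
    simpa using (tendsto_rpow_neg_atTop (by linarith : 0 < -s.re / 2)).const_mul C
  refine squeeze_zero_norm' ?_ hlim
  filter_upwards [eventually_ge_atTop 1] with x hx
  exact (hC s x hx).trans_eq (by ring_nf)

end Comparison

section ZetaGrowth

/-- An antiderivative of `x ↦ (log x) ^ k * x ^ (-s)` on `x > 0`, for `s ≠ 1`, built by repeated
integration by parts. It plays the role of `∫ (log x) ^ k * x ^ (-s)` in the comparison of the
Dirichlet series of `ζ⁽ᵏ⁾` with an integral. -/
noncomputable def logPowAntideriv (s : ℂ) : ℕ → ℝ → ℂ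
  | 0, x => (x : ℂ) ^ (1 - s) / (1 - s)
  | k + 1, x => (Real.log x : ℂ) ^ (k + 1) * (x : ℂ) ^ (1 - s) / (1 - s) -
      (k + 1) / (1 - s) * logPowAntideriv s k x

theorem hasDerivAt_logPowAntideriv {s : ℂ} (hs : s ≠ 1) (k : ℕ) {x : ℝ} (hx : 0 < x) :
    HasDerivAt (logPowAntideriv s k) ((Real.log x : ℂ) ^ k * (x : ℂ) ^ (-s)) x := by
  have hs' : 1 - s ≠ 0 := sub_ne_zero.2 hs.symm
  have hexp : 1 - s - 1 = -s := by ring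
  induction k with
  | zero =>
    refine ((hasDerivAt_ofReal_cpow (1 - s) hx).div_const (1 - s)).congr_deriv ?_
    rw [hexp]
    field_simp
  | succ k ih =>
    refine (((hasDerivAt_log_pow_mul_cpow (k + 1) (1 - s) hx).div_const (1 - s)).sub
      (ih.const_mul ((k + 1) / (1 - s)))).congr_deriv ?_
    rw [hexp, Nat.add_sub_cancel]
    field_simp
    push_cast
    ring

theorem exists_norm_logPowAntideriv_le (k : ℕ) {δ : ℝ} (hδ : 0 < δ) :
    ∃ C, 0 < C ∧ ∀ s : ℂ, 1 ≤ |s.im| → ∀ x : ℝ, 1 ≤ x →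
      ‖logPowAntideriv s k x‖ ≤ C * x ^ (1 - s.re + δ) := by
  have hnorm : ∀ s : ℂ, 1 ≤ |s.im| → 1 ≤ ‖1 - s‖ := fun s hs ↦
    hs.trans (by simpa using Complex.abs_im_le_norm (1 - s))
  induction k with
  | zero =>
    refine ⟨1, one_pos, fun s hs x hx ↦ ?_⟩
    rw [logPowAntideriv, norm_div, Complex.norm_cpow_eq_rpow_re_of_pos (by linarith), one_mul]
    refine (div_le_self (by positivity) (hnorm s hs)).trans ?_
    exact Real.rpow_le_rpow_of_exponent_le hx (by simp; linarith)
  | succ k ih =>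
    obtain ⟨C, hC, ih⟩ := ih
    obtain ⟨D, hD, hlog⟩ := exists_norm_log_pow_mul_cpow_le (k + 1) hδ
    refine ⟨D + (k + 1) * C, by positivity, fun s hs x hx ↦ ?_⟩
    rw [logPowAntideriv, add_mul]
    refine (norm_sub_le _ _).trans (add_le_add ?_ ?_)
    · rw [norm_div]
      exact (div_le_self (by positivity) (hnorm s hs)).trans (by simpa using hlog (1 - s) x hx)
    · have hk : ‖(k : ℂ) + 1‖ = k + 1 := by exact_mod_cast Complex.norm_natCast (k + 1)
      rw [norm_mul, norm_div, mul_assoc, hk]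
      exact mul_le_mul (div_le_self (by positivity) (hnorm s hs)) (ih s hs x hx)
        (norm_nonneg _) (by positivity)

theorem tendsto_logPowAntideriv (k : ℕ) {s : ℂ} (hs : 1 < s.re) :
    Tendsto (logPowAntideriv s k) atTop (nhds 0) := by
  have hre : (1 - s).re < 0 := by simpa using hs
  induction k with
  | zero => simpa [logPowAntideriv, funext_iff] using
      (tendsto_log_pow_mul_cpow 0 hre).div_const (1 - s)
  | succ k ih =>
    simpa [logPowAntideriv] using ((tendsto_log_pow_mul_cpow (k + 1) hre).div_const (1 - s)).sub
      (ih.const_mul ((k + 1) / (1 - s)))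

theorem summable_log_pow_mul_cpow (k : ℕ) {s : ℂ} (hs : 1 < s.re) :
    Summable fun n : ℕ ↦ (Real.log n : ℂ) ^ k * (n : ℂ) ^ (-s) := by
  obtain ⟨C, -, hC⟩ := exists_norm_log_pow_mul_cpow_le k (δ := (s.re - 1) / 2) (by linarith)
  refine Summable.of_norm_bounded_eventually_nat
    (g := fun n : ℕ ↦ C * (n : ℝ) ^ (-s.re + (s.re - 1) / 2))
    ((Real.summable_nat_rpow.2 (by linarith)).mul_left C) ?_
  filter_upwards [eventually_ge_atTop 1] with n hn
  exact_mod_cast hC (-s) n (by exact_mod_cast hn)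

theorem exists_norm_sum_log_pow_mul_cpow_le (k : ℕ) {δ : ℝ} (hδ : 0 < δ) :
    ∃ C, 0 < C ∧ ∀ s : ℂ, 1 ≤ s.re → ∀ N : ℕ,
      ‖∑ n ∈ Finset.range N, (Real.log n : ℂ) ^ k * (n : ℂ) ^ (-s)‖ ≤ C * (N : ℝ) ^ δ := by
  obtain ⟨C, hC, hlog⟩ := exists_norm_log_pow_mul_cpow_le k (half_pos hδ)
  have hsum : Summable fun n : ℕ ↦ (n : ℝ) ^ (-1 - δ / 2) :=
    Real.summable_nat_rpow.2 (by linarith)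
  set S := ∑' n : ℕ, (n : ℝ) ^ (-1 - δ / 2)
  have : 0 ≤ S := tsum_nonneg fun n ↦ by positivity
  refine ⟨C * S + 1, by positivity, fun s hs N ↦ ?_⟩
  have hterm : ∀ n ∈ Finset.range N, ‖(Real.log n : ℂ) ^ k * (n : ℂ) ^ (-s)‖ ≤
      C * (N : ℝ) ^ δ * (n : ℝ) ^ (-1 - δ / 2) := by
    intro n hn
    rcases Nat.eq_zero_or_pos n with rfl | hn0
    · have : s ≠ 0 := by rintro rfl; simp at hs; linarith
      simp only [Nat.cast_zero, Complex.zero_cpow (neg_ne_zero.2 this), mul_zero, norm_zero]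
      positivity
    have hn1 : (1 : ℝ) ≤ n := by exact_mod_cast hn0
    have hnN : (n : ℝ) ≤ N := by exact_mod_cast (Finset.mem_range.1 hn).le
    calc _ ≤ C * (n : ℝ) ^ ((-s).re + δ / 2) := by exact_mod_cast hlog (-s) n hn1
      _ ≤ C * (n : ℝ) ^ (δ + (-1 - δ / 2)) := by
        refine mul_le_mul_of_nonneg_left (Real.rpow_le_rpow_of_exponent_le hn1 ?_) hC.le
        rw [Complex.neg_re]
        linarith
      _ = C * (n : ℝ) ^ δ * (n : ℝ) ^ (-1 - δ / 2) := by
        rw [Real.rpow_add (by linarith), mul_assoc]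
      _ ≤ _ := by gcongr
  calc _ ≤ ∑ n ∈ Finset.range N, C * (N : ℝ) ^ δ * (n : ℝ) ^ (-1 - δ / 2) :=
        norm_sum_le_of_le _ hterm
    _ = C * (N : ℝ) ^ δ * ∑ n ∈ Finset.range N, (n : ℝ) ^ (-1 - δ / 2) := by rw [Finset.mul_sum]
    _ ≤ C * (N : ℝ) ^ δ * S := by
      gcongr
      exact hsum.sum_le_tsum _ fun n _ ↦ by positivity
    _ ≤ (C * S + 1) * (N : ℝ) ^ δ := by
      have : 0 ≤ (N : ℝ) ^ δ := by positivity
      linarith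

theorem exists_norm_log_pow_mul_cpow_sub_logPowAntideriv_le (k : ℕ) {δ : ℝ} (hδ : 0 < δ)
    (hδ2 : δ ≤ 2) :
    ∃ C, 0 < C ∧ ∀ s : ℂ, 1 < s.re → ∀ x : ℝ, 1 ≤ x →
      ‖(Real.log x : ℂ) ^ k * (x : ℂ) ^ (-s) -
        (logPowAntideriv s k (x + 1) - logPowAntideriv s k x)‖ ≤
        C * (1 + ‖s‖) * x ^ (δ - 1 - s.re) := by
  obtain ⟨C, hC, hlog⟩ := exists_norm_log_pow_mul_cpow_le k hδ
  obtain ⟨D, hD, hlog'⟩ := exists_norm_log_pow_mul_cpow_le (k - 1) hδ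
  refine ⟨k * D + C, by positivity, fun s hs a ha ↦ ?_⟩
  have hs1 : s ≠ 1 := by rintro rfl; simp at hs
  refine norm_deriv_sub_image_sub_le (h := fun x ↦ (Real.log x : ℂ) ^ k * (x : ℂ) ^ (-s))
    (fun x hx ↦ hasDerivAt_logPowAntideriv hs1 k (by linarith [hx.1]))
    (fun x hx ↦ hasDerivAt_log_pow_mul_cpow k (-s) (by linarith [hx.1])) fun x hx ↦ ?_
  have hx1 : 1 ≤ x := ha.trans hx.1
  have hpow : x ^ ((-s - 1).re + δ) ≤ a ^ (δ - 1 - s.re) := by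
    rw [show (-s - 1).re + δ = δ - 1 - s.re by simp; ring]
    exact Real.rpow_le_rpow_of_nonpos (by linarith) hx.1 (by linarith)
  calc _ ≤ k * (D * x ^ ((-s - 1).re + δ)) + ‖s‖ * (C * x ^ ((-s - 1).re + δ)) := by
        refine (norm_add_le _ _).trans ?_
        rw [norm_mul, norm_mul _ (_ * _), norm_neg, Complex.norm_natCast]
        gcongr
        · exact hlog' _ x hx1
        · exact hlog _ x hx1
    _ ≤ k * (D * a ^ (δ - 1 - s.re)) + ‖s‖ * (C * a ^ (δ - 1 - s.re)) := by gcongr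
    _ ≤ _ := by
      have hk : 0 ≤ k * D * ‖s‖ * a ^ (δ - 1 - s.re) := by positivity
      have hC' : 0 ≤ C * a ^ (δ - 1 - s.re) := by positivity
      linarith

theorem exists_norm_tsum_log_pow_mul_cpow_add_le (k : ℕ) {δ : ℝ} (hδ : 0 < δ) (hδ1 : δ ≤ 1) :
    ∃ C, 0 < C ∧ ∀ s : ℂ, 1 < s.re → ∀ N : ℕ, 1 ≤ N →
      ‖∑' n : ℕ, (Real.log (n + N : ℕ) : ℂ) ^ k * ((n + N : ℕ) : ℂ) ^ (-s) +
        logPowAntideriv s k N‖ ≤ C * (1 + ‖s‖) * (N : ℝ) ^ (δ - s.re) := by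
  obtain ⟨C, hC, hstep⟩ := exists_norm_log_pow_mul_cpow_sub_logPowAntideriv_le k (half_pos hδ)
    (by linarith)
  have hsum : Summable fun n : ℕ ↦ (n : ℝ) ^ (-1 - δ / 2) :=
    Real.summable_nat_rpow.2 (by linarith)
  set S := ∑' n : ℕ, (n : ℝ) ^ (-1 - δ / 2)
  have : 0 ≤ S := tsum_nonneg fun n ↦ by positivity
  refine ⟨C * S + 1, by positivity, fun s hs N hN ↦ ?_⟩
  have hN0 : (0 : ℝ) < N := by exact_mod_cast hN
  have hterm : ∀ n : ℕ, N ≤ n → ‖(Real.log n : ℂ) ^ k * (n : ℂ) ^ (-s) -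
      (logPowAntideriv s k (n + 1 : ℕ) - logPowAntideriv s k n)‖ ≤
      C * (1 + ‖s‖) * (N : ℝ) ^ (δ - s.re) * (n : ℝ) ^ (-1 - δ / 2) := by
    intro n hn
    have hNn : (N : ℝ) ≤ n := by exact_mod_cast hn
    calc _ ≤ C * (1 + ‖s‖) * (n : ℝ) ^ (δ / 2 - 1 - s.re) := by
          exact_mod_cast hstep s hs n (by exact_mod_cast hN.trans hn)
      _ = C * (1 + ‖s‖) * ((n : ℝ) ^ (δ - s.re) * (n : ℝ) ^ (-1 - δ / 2)) := by
          rw [← Real.rpow_add (by linarith)]; ring_nf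
      _ ≤ C * (1 + ‖s‖) * ((N : ℝ) ^ (δ - s.re) * (n : ℝ) ^ (-1 - δ / 2)) := by
          gcongr ?_ * (?_ * _)
          exact Real.rpow_le_rpow_of_nonpos hN0 hNn (by linarith)
      _ = _ := by ring
  have htail : ∑' n : ℕ, ((n + N : ℕ) : ℝ) ^ (-1 - δ / 2) ≤ S :=
    tsum_comp_le_tsum_of_inj hsum (fun n ↦ by positivity) (add_left_injective N)
  calc _ ≤ ∑' n : ℕ, C * (1 + ‖s‖) * (N : ℝ) ^ (δ - s.re) * ((n + N : ℕ) : ℝ) ^ (-1 - δ / 2) :=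
        norm_tsum_add_antideriv_le (H := fun n : ℕ ↦ logPowAntideriv s k n)
          (summable_log_pow_mul_cpow k hs)
          ((tendsto_logPowAntideriv k hs).comp tendsto_natCast_atTop_atTop)
          (hsum.mul_left _) hterm
    _ ≤ C * (1 + ‖s‖) * (N : ℝ) ^ (δ - s.re) * S := by
        rw [tsum_mul_left]
        gcongr
    _ ≤ _ := by
        have : 0 ≤ (1 + ‖s‖) * (N : ℝ) ^ (δ - s.re) := by positivity
        linarith

theorem exists_norm_tsum_log_pow_mul_cpow_le_of_le_one (k : ℕ) {δ : ℝ} (hδ : 0 < δ) (hδ1 : δ ≤ 1) :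
    ∃ C, 0 < C ∧ ∀ s : ℂ, 1 < s.re → s.re ≤ 2 → 1 ≤ |s.im| →
      ‖∑' n : ℕ, (Real.log n : ℂ) ^ k * (n : ℂ) ^ (-s)‖ ≤ C * |s.im| ^ δ := by
  obtain ⟨C₁, hC₁, hinit⟩ := exists_norm_sum_log_pow_mul_cpow_le k hδ
  obtain ⟨C₂, hC₂, htail⟩ := exists_norm_tsum_log_pow_mul_cpow_add_le k hδ hδ1
  obtain ⟨C₃, hC₃, hanti⟩ := exists_norm_logPowAntideriv_le k hδ
  refine ⟨(C₁ + 4 * C₂ + C₃) * 2 ^ δ, by positivity, fun s hs hs2 ht ↦ ?_⟩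
  set t := |s.im|
  set N := ⌈t⌉₊
  have htN : t ≤ N := Nat.le_ceil t
  have hN1 : (1 : ℝ) ≤ N := ht.trans htN
  have hN0 : (0 : ℝ) < N := by linarith
  have hN2 : (N : ℝ) ≤ 2 * t := by
    have := Nat.ceil_lt_add_one (by linarith : 0 ≤ t)
    linarith
  have hNδ : (N : ℝ) ^ δ ≤ 2 ^ δ * t ^ δ := by
    rw [← Real.mul_rpow (by norm_num) (by linarith)]
    gcongr
  have hsN : 1 + ‖s‖ ≤ 4 * N := by
    have := Complex.norm_le_abs_re_add_abs_im s
    rw [abs_of_pos (by linarith : 0 < s.re)] at this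
    linarith
  have htail' : ‖∑' n : ℕ, (Real.log (n + N : ℕ) : ℂ) ^ k * ((n + N : ℕ) : ℂ) ^ (-s) +
      logPowAntideriv s k N‖ ≤ 4 * C₂ * (N : ℝ) ^ δ :=
    calc _ ≤ C₂ * (1 + ‖s‖) * (N : ℝ) ^ (δ - s.re) := htail s hs N (by exact_mod_cast hN1)
      _ ≤ C₂ * (4 * N) * (N : ℝ) ^ (δ - 1) := by gcongr
      _ = 4 * C₂ * (N : ℝ) ^ δ := by rw [Real.rpow_sub_one hN0.ne']; field_simp
  have hanti' : ‖logPowAntideriv s k N‖ ≤ C₃ * (N : ℝ) ^ δ :=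
    calc _ ≤ C₃ * (N : ℝ) ^ (1 - s.re + δ) := hanti s ht N hN1
      _ ≤ C₃ * (N : ℝ) ^ δ := mul_le_mul_of_nonneg_left
        (Real.rpow_le_rpow_of_exponent_le hN1 (by linarith)) hC₃.le
  rw [← (summable_log_pow_mul_cpow k hs).sum_add_tsum_nat_add N]
  calc _ = ‖∑ n ∈ Finset.range N, (Real.log n : ℂ) ^ k * (n : ℂ) ^ (-s) +
        (∑' n : ℕ, (Real.log (n + N : ℕ) : ℂ) ^ k * ((n + N : ℕ) : ℂ) ^ (-s) +
          logPowAntideriv s k N) - logPowAntideriv s k N‖ := by congr 1; ring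
    _ ≤ C₁ * (N : ℝ) ^ δ + 4 * C₂ * (N : ℝ) ^ δ + C₃ * (N : ℝ) ^ δ :=
        (norm_sub_le _ _).trans
          (add_le_add ((norm_add_le _ _).trans (add_le_add (hinit s hs.le N) htail')) hanti')
    _ = (C₁ + 4 * C₂ + C₃) * (N : ℝ) ^ δ := by ring
    _ ≤ (C₁ + 4 * C₂ + C₃) * (2 ^ δ * t ^ δ) := by gcongr
    _ = _ := by ring

theorem LSeries_logMul_iterate_one (k : ℕ) {s : ℂ} (hs : s ≠ 0) :
    LSeries (LSeries.logMul^[k] 1) s = ∑' n : ℕ, (Real.log n : ℂ) ^ k * (n : ℂ) ^ (-s) := by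
  have hiterate : ∀ n : ℕ, (LSeries.logMul^[k] 1) n = (Real.log n : ℂ) ^ k := by
    intro n
    induction k with
    | zero => simp
    | succ k ih =>
      rw [Function.iterate_succ', Function.comp_apply, LSeries.logMul, ih, pow_succ',
        Complex.natCast_log]
  refine tsum_congr fun n ↦ ?_
  rcases eq_or_ne n 0 with rfl | hn
  · simp [hs]
  · rw [LSeries.term_of_ne_zero hn, hiterate, Complex.cpow_neg, div_eq_mul_inv]

theorem iteratedDeriv_riemannZeta (k : ℕ) {s : ℂ} (hs : 1 < s.re) :
    iteratedDeriv k riemannZeta s =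
      (-1) ^ k * ∑' n : ℕ, (Real.log n : ℂ) ^ k * (n : ℂ) ^ (-s) := by
  have hs0 : s ≠ 0 := by rintro rfl; simp at hs; linarith
  have hev : riemannZeta =ᶠ[nhds s] LSeries 1 := by
    filter_upwards [(isOpen_lt continuous_const Complex.continuous_re).mem_nhds hs] with z hz
    exact (LSeries_one_eq_riemannZeta hz).symm
  rw [hev.iteratedDeriv_eq, LSeries_iteratedDeriv, LSeries_logMul_iterate_one k hs0]
  rw [LSeries.abscissaOfAbsConv_one]
  exact_mod_cast hs

theorem exists_norm_iteratedDeriv_riemannZeta_le (k : ℕ) {δ : ℝ} (hδ : 0 < δ) :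
    ∃ C, 0 < C ∧ ∀ s : ℂ, 1 < s.re → s.re ≤ 2 → 1 ≤ |s.im| →
      ‖iteratedDeriv k riemannZeta s‖ ≤ C * |s.im| ^ δ := by
  obtain ⟨C, hC, hbound⟩ := exists_norm_tsum_log_pow_mul_cpow_le_of_le_one k
    (lt_min hδ one_pos) (min_le_right δ 1)
  refine ⟨C, hC, fun s hs hs2 ht ↦ ?_⟩
  rw [iteratedDeriv_riemannZeta k hs, norm_mul, norm_pow, norm_neg, norm_one, one_pow, one_mul]
  refine (hbound s hs hs2 ht).trans (mul_le_mul_of_nonneg_left ?_ hC.le)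
  exact Real.rpow_le_rpow_of_exponent_le ht (min_le_left δ 1)

end ZetaGrowth

section ZetaLowerBound

/-- The entire function `(s - 1) * ζ(s)`, with its removable singularity at `1` filled in. It
controls `ζ` and `ζ'/ζ` near the pole. -/
noncomputable def subOneMulZeta : ℂ → ℂ :=
  Function.update (fun s ↦ (s - 1) * riemannZeta s) 1 1

theorem subOneMulZeta_of_ne {s : ℂ} (hs : s ≠ 1) : subOneMulZeta s = (s - 1) * riemannZeta s :=
  Function.update_of_ne hs _ _

theorem subOneMulZeta_one : subOneMulZeta 1 = 1 := Function.update_self _ _ _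

theorem differentiable_subOneMulZeta : Differentiable ℂ subOneMulZeta := by
  rw [← differentiableOn_univ,
    ← Complex.differentiableOn_compl_singleton_and_continuousAt_iff (c := 1) univ_mem]
  refine ⟨DifferentiableOn.congr (f := fun s ↦ (s - 1) * riemannZeta s)
    (fun s hs ↦ DifferentiableAt.differentiableWithinAt ?_)
    fun _ hs ↦ subOneMulZeta_of_ne (Set.mem_sdiff_singleton.mp hs).2,
    continuousWithinAt_compl_self.mp ?_⟩
  · exact (differentiableAt_id.sub_const 1).mul
      (differentiableAt_riemannZeta (Set.mem_sdiff_singleton.mp hs).2)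
  · simpa [subOneMulZeta] using riemannZeta_residue_one

theorem deriv_subOneMulZeta {s : ℂ} (hs : s ≠ 1) :
    deriv subOneMulZeta s = riemannZeta s + (s - 1) * deriv riemannZeta s := by
  have hev : subOneMulZeta =ᶠ[nhds s] fun z ↦ (z - 1) * riemannZeta z := by
    filter_upwards [isOpen_compl_singleton.mem_nhds hs] with z hz
    exact subOneMulZeta_of_ne hz
  rw [hev.deriv_eq]
  simpa using (((hasDerivAt_id s).sub_const 1).fun_mul
    (differentiableAt_riemannZeta hs).hasDerivAt).deriv

theorem subOneMulZeta_ne_zero {s : ℂ} (hs : 1 ≤ s.re) : subOneMulZeta s ≠ 0 := by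
  rcases eq_or_ne s 1 with rfl | h
  · simp [subOneMulZeta_one]
  · rw [subOneMulZeta_of_ne h]
    exact mul_ne_zero (sub_ne_zero.2 h) (riemannZeta_ne_zero_of_one_le_re hs)

theorem exists_norm_riemannZeta_ofReal_le :
    ∃ A, 1 ≤ A ∧ ∀ σ : ℝ, 1 < σ → σ ≤ 2 → ‖riemannZeta σ‖ ≤ A / (σ - 1) := by
  obtain ⟨A, hA⟩ := (isCompact_Icc (a := (1 : ℝ)) (b := 2)).exists_bound_of_continuousOn
    (f := fun σ : ℝ ↦ subOneMulZeta σ)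
    (differentiable_subOneMulZeta.continuous.comp Complex.continuous_ofReal).continuousOn
  refine ⟨max A 1, le_max_right _ _, fun σ hσ hσ2 ↦ ?_⟩
  have hbound := hA σ ⟨hσ.le, hσ2⟩
  have hne : (σ : ℂ) ≠ 1 := by exact_mod_cast hσ.ne'
  rw [subOneMulZeta_of_ne hne, norm_mul, show (σ : ℂ) - 1 = ((σ - 1 : ℝ) : ℂ) by push_cast; rfl,
    Complex.norm_real, Real.norm_of_nonneg (by linarith)] at hbound
  rw [le_div_iff₀ (by linarith), mul_comm]
  exact hbound.trans (le_max_left _ _)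

theorem one_le_norm_riemannZeta_product {σ : ℝ} (hσ : 1 < σ) (t : ℝ) :
    1 ≤ ‖riemannZeta σ‖ ^ 3 * ‖riemannZeta (σ + t * Complex.I)‖ ^ 4 *
      ‖riemannZeta (σ + (2 * t : ℝ) * Complex.I)‖ := by
  have hprod := DirichletCharacter.norm_LFunction_product_ge_one (N := 1) 1 (sub_pos.2 hσ) t
  simp only [DirichletCharacter.LFunctionTrivChar, DirichletCharacter.LFunction_modOne_eq,
    norm_mul, norm_pow] at hprod
  have hσ_eq : (1 : ℂ) + ((σ - 1 : ℝ) : ℂ) = σ := by push_cast; ring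
  have htwo : (2 : ℂ) * Complex.I * t = (2 * t : ℝ) * Complex.I := by push_cast; ring
  rwa [hσ_eq, htwo, mul_comm Complex.I (t : ℂ)] at hprod

theorem exists_sub_one_pow_three_le {δ : ℝ} (hδ : 0 < δ) :
    ∃ C, 0 < C ∧ ∀ s : ℂ, 1 < s.re → s.re ≤ 2 → 1 ≤ |s.im| →
      (s.re - 1) ^ 3 ≤ C * |s.im| ^ δ * ‖riemannZeta s‖ ^ 4 := by
  obtain ⟨A, hA, hpole⟩ := exists_norm_riemannZeta_ofReal_le
  obtain ⟨C, hC, hζ⟩ := exists_norm_iteratedDeriv_riemannZeta_le 0 hδ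
  simp only [iteratedDeriv_zero] at hζ
  refine ⟨A ^ 3 * C * 2 ^ δ, by positivity, fun s hs hs2 ht ↦ ?_⟩
  have hsub : 0 < s.re - 1 := by linarith
  have hdouble : ‖riemannZeta (s.re + (2 * s.im : ℝ) * Complex.I)‖ ≤ C * (2 ^ δ * |s.im| ^ δ) := by
    have := hζ (s.re + (2 * s.im : ℝ) * Complex.I) (by simpa using hs) (by simpa using hs2)
      (by simp; linarith)
    rw [← Real.mul_rpow zero_le_two (abs_nonneg _)]
    simpa [abs_mul] using this
  have hprod := one_le_norm_riemannZeta_product hs s.im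
  rw [Complex.re_add_im] at hprod
  calc (s.re - 1) ^ 3 = (s.re - 1) ^ 3 * 1 := (mul_one _).symm
    _ ≤ (s.re - 1) ^ 3 *
        ((A / (s.re - 1)) ^ 3 * ‖riemannZeta s‖ ^ 4 * (C * (2 ^ δ * |s.im| ^ δ))) := by
      gcongr
      refine hprod.trans ?_
      gcongr
      exact hpole _ hs hs2
    _ = _ := by field_simp

/-- With `η = 1 / (16 A M⁵)`, the hypothesis gives `2ηM ≤ ‖f (1 + η)‖`, and the mean value theorem
loses at most `ηM` between `σ` and `1 + η`. -/
theorem le_norm_of_sub_one_pow_three_le {E : Type*} [NormedAddCommGroup E] [NormedSpace ℝ E]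
    {f f' : ℝ → E} {A M : ℝ} (hA : 1 ≤ A) (hM : 1 ≤ M)
    (hf : ∀ σ, 1 < σ → σ ≤ 2 → HasDerivAt f (f' σ) σ) (hf' : ∀ σ, 1 < σ → σ ≤ 2 → ‖f' σ‖ ≤ M)
    (hlow : ∀ σ, 1 < σ → σ ≤ 2 → (σ - 1) ^ 3 ≤ A * M * ‖f σ‖ ^ 4)
    {σ : ℝ} (hσ : 1 < σ) (hσ2 : σ ≤ 2) : 1 / (16 * A * M ^ 4) ≤ ‖f σ‖ := by
  obtain ⟨η, hη⟩ : ∃ η, η = 1 / (16 * A * M ^ 5) := ⟨_, rfl⟩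
  have hη0 : 0 < η := by rw [hη]; positivity
  have hη1 : η ≤ 1 := by
    have := one_le_mul_of_one_le_of_one_le hA (one_le_pow₀ hM (n := 5))
    rw [hη, div_le_one (by positivity)]
    linarith
  have hηM : 1 / (16 * A * M ^ 4) = η * M := by rw [hη]; field_simp
  have hfar : ∀ τ, 1 + η ≤ τ → τ ≤ 2 → 2 * (η * M) ≤ ‖f τ‖ := by
    intro τ hτ hτ2
    have hpow : A * M * (2 * (η * M)) ^ 4 ≤ A * M * ‖f τ‖ ^ 4 :=
      calc A * M * (2 * (η * M)) ^ 4 = η ^ 3 := by rw [hη]; field_simp; norm_num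
        _ ≤ (τ - 1) ^ 3 := by gcongr; linarith
        _ ≤ _ := hlow τ (by linarith) hτ2
    exact le_of_pow_le_pow_left₀ four_ne_zero (norm_nonneg _)
      (le_of_mul_le_mul_left hpow (by positivity))
  have hηM0 : 0 < η * M := by positivity
  rw [hηM]
  rcases le_total (1 + η) σ with h | h
  · linarith [hfar σ h hσ2]
  · have hmvt := (convex_Icc σ (1 + η)).norm_image_sub_le_of_norm_hasDerivWithin_le
      (fun x hx ↦ (hf x (by linarith [hx.1]) (by linarith [hx.2])).hasDerivWithinAt)
      (fun x hx ↦ hf' x (by linarith [hx.1]) (by linarith [hx.2]))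
      (Set.left_mem_Icc.2 h) (Set.right_mem_Icc.2 h)
    have hlen : M * ‖1 + η - σ‖ ≤ M * η := by
      rw [Real.norm_of_nonneg (by linarith)]
      gcongr
      linarith
    have htri := norm_sub_norm_le (f (1 + η)) (f σ)
    linarith [hfar (1 + η) le_rfl (by linarith)]

theorem rpow_div_four_pow_four {x : ℝ} (hx : 0 ≤ x) (δ : ℝ) : (x ^ (δ / 4)) ^ 4 = x ^ δ := by
  rw [← Real.rpow_natCast, ← Real.rpow_mul hx]
  norm_num

theorem hasDerivAt_riemannZeta_vertical {σ : ℝ} (hσ : 1 < σ) (t : ℝ) :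
    HasDerivAt (fun σ : ℝ ↦ riemannZeta (σ + t * Complex.I))
      (deriv riemannZeta (σ + t * Complex.I)) σ := by
  have hne : (σ : ℂ) + t * Complex.I ≠ 1 := fun h ↦ by
    have := congrArg Complex.re h
    simp at this
    linarith
  exact ((differentiableAt_riemannZeta hne).hasDerivAt.comp_add_const (σ : ℂ)
    (t * Complex.I)).comp_ofReal

theorem exists_norm_inv_riemannZeta_le {δ : ℝ} (hδ : 0 < δ) :
    ∃ C, 0 < C ∧ ∀ s : ℂ, 1 < s.re → s.re ≤ 2 → 1 ≤ |s.im| →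
      ‖(riemannZeta s)⁻¹‖ ≤ C * |s.im| ^ δ := by
  have hδ4 : 0 < δ / 4 := by linarith
  obtain ⟨C₀, hC₀, hlow⟩ := exists_sub_one_pow_three_le hδ4
  obtain ⟨C₁, hC₁, hderiv⟩ := exists_norm_iteratedDeriv_riemannZeta_le 1 hδ4
  simp only [iteratedDeriv_one] at hderiv
  refine ⟨16 * (1 + C₀) * (1 + C₁) ^ 4, by positivity, fun s hs hs2 ht ↦ ?_⟩
  have hX4 := rpow_div_four_pow_four (abs_nonneg s.im) δ
  set X := |s.im| ^ (δ / 4) with hX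
  have hX1 : 1 ≤ X := Real.one_le_rpow ht hδ4.le
  have hbound := le_norm_of_sub_one_pow_three_le
    (f := fun σ : ℝ ↦ riemannZeta (σ + s.im * Complex.I))
    (f' := fun σ : ℝ ↦ deriv riemannZeta (σ + s.im * Complex.I)) (A := 1 + C₀) (M := (1 + C₁) * X)
    (by linarith) (one_le_mul_of_one_le_of_one_le (by linarith) hX1)
    (fun σ hσ _ ↦ hasDerivAt_riemannZeta_vertical hσ s.im)
    (fun σ hσ hσ2 ↦ by
      refine (hderiv (σ + s.im * Complex.I) (by simpa using hσ) (by simpa using hσ2)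
        (by simpa using ht)).trans ?_
      rw [show (σ + s.im * Complex.I).im = s.im by simp, ← hX]
      gcongr
      linarith)
    (fun σ hσ hσ2 ↦ by
      have := hlow (σ + s.im * Complex.I) (by simpa using hσ) (by simpa using hσ2)
        (by simpa using ht)
      rw [show (σ + s.im * Complex.I).im = s.im by simp, ← hX,
        show (σ + s.im * Complex.I).re = σ by simp] at this
      refine this.trans ?_
      gcongr
      · linarith
      · exact le_mul_of_one_le_left (by positivity) (by linarith))
    hs hs2
  rw [Complex.re_add_im, one_div] at hbound
  rw [norm_inv, ← hX4]
  refine (inv_le_of_inv_le₀ (by positivity) hbound).trans_eq (by ring)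

end ZetaLowerBound

section DirichletSeries

open ArithmeticFunction (vonMangoldt)

theorem abscissaOfAbsConv_vonMangoldt_sub_one_le_one :
    LSeries.abscissaOfAbsConv (fun n ↦ (vonMangoldt n : ℂ) - 1) ≤ 1 :=
  LSeries.abscissaOfAbsConv_le_of_forall_lt_LSeriesSummable (x := 1) fun y hy ↦
    (ArithmeticFunction.LSeriesSummable_vonMangoldt (by simpa using hy)).sub
      (LSeriesSummable_one_iff.2 (by simpa using hy))

theorem LSeriesSummable_logMul_vonMangoldt_sub_one {s : ℂ} (hs : 1 < s.re) :
    LSeriesSummable (LSeries.logMul fun n ↦ (vonMangoldt n : ℂ) - 1) s :=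
  LSeriesSummable_logMul_of_lt_re
    (abscissaOfAbsConv_vonMangoldt_sub_one_le_one.trans_lt (by exact_mod_cast hs))

theorem LSeries_vonMangoldt_sub_one {s : ℂ} (hs : 1 < s.re) :
    LSeries (fun n ↦ (vonMangoldt n : ℂ) - 1) s =
      -deriv riemannZeta s / riemannZeta s - riemannZeta s := by
  rw [← ArithmeticFunction.LSeries_vonMangoldt_eq_deriv_riemannZeta_div hs,
    ← LSeries_one_eq_riemannZeta hs]
  exact LSeries_sub (ArithmeticFunction.LSeriesSummable_vonMangoldt hs)
    (LSeriesSummable_one_iff.2 hs)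

theorem LSeries_logMul_vonMangoldt_sub_one_eq_neg_deriv {F : ℂ → ℂ} {s : ℂ} (hs : 1 < s.re)
    (hF : ∀ z : ℂ, 1 < z.re → -deriv riemannZeta z / riemannZeta z - riemannZeta z = F z) :
    LSeries (LSeries.logMul fun n ↦ (vonMangoldt n : ℂ) - 1) s = -deriv F s := by
  have hev : LSeries (fun n ↦ (vonMangoldt n : ℂ) - 1) =ᶠ[nhds s] F := by
    filter_upwards [(isOpen_lt continuous_const Complex.continuous_re).mem_nhds hs] with z hz
    rw [LSeries_vonMangoldt_sub_one hz, hF z hz]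
  rw [← hev.deriv_eq, LSeries_deriv
    (abscissaOfAbsConv_vonMangoldt_sub_one_le_one.trans_lt (by exact_mod_cast hs)), neg_neg]

theorem LSeries_logMul_vonMangoldt_sub_one {s : ℂ} (hs : 1 < s.re) :
    LSeries (LSeries.logMul fun n ↦ (vonMangoldt n : ℂ) - 1) s =
      (iteratedDeriv 2 riemannZeta s * riemannZeta s - deriv riemannZeta s ^ 2) *
        (riemannZeta s)⁻¹ ^ 2 + deriv riemannZeta s := by
  have hne : s ≠ 1 := by rintro rfl; simp at hs
  have hzeta := differentiableAt_riemannZeta hne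
  have hzeta' : DifferentiableAt ℂ (deriv riemannZeta) s :=
    (DifferentiableOn.deriv (fun z hz ↦ (differentiableAt_riemannZeta
      hz).differentiableWithinAt) isOpen_compl_singleton).differentiableAt
      (isOpen_compl_singleton.mem_nhds hne)
  rw [LSeries_logMul_vonMangoldt_sub_one_eq_neg_deriv hs fun _ _ ↦ rfl,
    ((hzeta'.hasDerivAt.fun_neg.fun_div hzeta.hasDerivAt
      (riemannZeta_ne_zero_of_one_lt_re hs)).fun_sub hzeta.hasDerivAt).deriv,
    iteratedDeriv_succ, iteratedDeriv_one]
  ring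

theorem exists_norm_LSeries_logMul_vonMangoldt_sub_one_le_of_one_le_im {δ : ℝ} (hδ : 0 < δ) :
    ∃ C, 0 < C ∧ ∀ s : ℂ, 1 < s.re → s.re ≤ 2 → 1 ≤ |s.im| →
      ‖LSeries (LSeries.logMul fun n ↦ (vonMangoldt n : ℂ) - 1) s‖ ≤ C * |s.im| ^ δ := by
  have hδ4 : 0 < δ / 4 := by linarith
  obtain ⟨C₀, hC₀, hzeta⟩ := exists_norm_iteratedDeriv_riemannZeta_le 0 hδ4
  obtain ⟨C₁, hC₁, hderiv⟩ := exists_norm_iteratedDeriv_riemannZeta_le 1 hδ4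
  obtain ⟨C₂, hC₂, hderiv2⟩ := exists_norm_iteratedDeriv_riemannZeta_le 2 hδ4
  obtain ⟨B, hB, hinv⟩ := exists_norm_inv_riemannZeta_le hδ4
  simp only [iteratedDeriv_zero, iteratedDeriv_one] at hzeta hderiv
  refine ⟨(C₂ * C₀ + C₁ ^ 2) * B ^ 2 + C₁, by positivity, fun s hs hs2 ht ↦ ?_⟩
  have hX1 : 1 ≤ |s.im| ^ (δ / 4) := Real.one_le_rpow ht hδ4.le
  specialize hzeta s hs hs2 ht
  specialize hderiv s hs hs2 ht
  specialize hderiv2 s hs hs2 ht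
  specialize hinv s hs hs2 ht
  rw [LSeries_logMul_vonMangoldt_sub_one hs, ← rpow_div_four_pow_four (abs_nonneg s.im)]
  set X := |s.im| ^ (δ / 4)
  calc _ ≤ (‖iteratedDeriv 2 riemannZeta s‖ * ‖riemannZeta s‖ + ‖deriv riemannZeta s‖ ^ 2) *
        ‖(riemannZeta s)⁻¹‖ ^ 2 + ‖deriv riemannZeta s‖ := by
        refine (norm_add_le _ _).trans ?_
        rw [norm_mul, norm_pow, ← norm_mul, ← norm_pow (deriv riemannZeta s)]
        gcongr
        exact norm_sub_le _ _
    _ ≤ (C₂ * X * (C₀ * X) + (C₁ * X) ^ 2) * (B * X) ^ 2 + C₁ * X := by gcongr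
    _ ≤ (C₂ * X * (C₀ * X) + (C₁ * X) ^ 2) * (B * X) ^ 2 + C₁ * X ^ 4 := by
        gcongr
        exact le_self_pow₀ hX1 four_ne_zero
    _ = _ := by ring

/-- The poles at `s = 1` of `-ζ'/ζ` and `ζ` cancel. -/
theorem neg_deriv_riemannZeta_div_sub_riemannZeta {s : ℂ} (hs : 1 < s.re) :
    -deriv riemannZeta s / riemannZeta s - riemannZeta s =
      -deriv subOneMulZeta s / subOneMulZeta s - dslope subOneMulZeta 1 s := by
  have hne : s ≠ 1 := by rintro rfl; simp at hs
  have hne' : s - 1 ≠ 0 := sub_ne_zero.2 hne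
  have hzeta := riemannZeta_ne_zero_of_one_lt_re hs
  rw [dslope_of_ne _ hne, slope_def_field, deriv_subOneMulZeta hne, subOneMulZeta_of_ne hne,
    subOneMulZeta_one]
  field_simp
  ring

theorem exists_norm_LSeries_logMul_vonMangoldt_sub_one_le_of_im_le (T : ℝ) :
    ∃ C, ∀ s : ℂ, 1 < s.re → s.re ≤ 2 → |s.im| ≤ T →
      ‖LSeries (LSeries.logMul fun n ↦ (vonMangoldt n : ℂ) - 1) s‖ ≤ C := by
  have hg := differentiable_subOneMulZeta
  have hopen : IsOpen {s | subOneMulZeta s ≠ 0} := isOpen_ne_fun hg.continuous continuous_const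
  have hslope : Differentiable ℂ (dslope subOneMulZeta 1) := by
    rw [← differentiableOn_univ, Complex.differentiableOn_dslope univ_mem]
    exact hg.differentiableOn
  have hF : DifferentiableOn ℂ
      (fun s ↦ -deriv subOneMulZeta s / subOneMulZeta s - dslope subOneMulZeta 1 s)
      {s | subOneMulZeta s ≠ 0} :=
    ((hg.differentiableOn.deriv hopen).fun_neg.fun_div hg.differentiableOn fun _ hs ↦ hs).fun_sub
      hslope.differentiableOn
  have hcompact : IsCompact (Set.Icc (1 : ℝ) 2 ×ℂ Set.Icc (-T) T) :=
    isCompact_Icc.reProdIm isCompact_Icc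
  obtain ⟨C, hC⟩ := hcompact.exists_bound_of_continuousOn
    ((hF.deriv hopen).continuousOn.mono fun s hs ↦
      subOneMulZeta_ne_zero (Complex.mem_reProdIm.1 hs).1.1)
  refine ⟨C, fun s hs hs2 ht ↦ ?_⟩
  rw [LSeries_logMul_vonMangoldt_sub_one_eq_neg_deriv hs fun _ hz ↦
    neg_deriv_riemannZeta_div_sub_riemannZeta hz, norm_neg]
  exact hC s (Complex.mem_reProdIm.2 ⟨⟨hs.le, hs2⟩, abs_le.1 ht⟩)

theorem exists_norm_LSeries_logMul_vonMangoldt_sub_one_le {δ : ℝ} (hδ : 0 < δ) :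
    ∃ C, 0 < C ∧ ∀ s : ℂ, 1 < s.re → s.re ≤ 2 →
      ‖LSeries (LSeries.logMul fun n ↦ (vonMangoldt n : ℂ) - 1) s‖ ≤ C * (1 + s.im ^ 2) ^ δ := by
  obtain ⟨C₁, hC₁, hlarge⟩ := exists_norm_LSeries_logMul_vonMangoldt_sub_one_le_of_one_le_im hδ
  obtain ⟨C₂, hsmall⟩ := exists_norm_LSeries_logMul_vonMangoldt_sub_one_le_of_im_le 1
  refine ⟨C₁ + |C₂|, by positivity, fun s hs hs2 ↦ ?_⟩
  have hone : 1 ≤ (1 + s.im ^ 2) ^ δ :=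
    Real.one_le_rpow (by linarith [sq_nonneg s.im]) hδ.le
  rcases le_total 1 |s.im| with h | h
  · have hle : |s.im| ≤ 1 + s.im ^ 2 := by nlinarith [sq_abs s.im]
    calc _ ≤ C₁ * |s.im| ^ δ := hlarge s hs hs2 h
      _ ≤ (C₁ + |C₂|) * (1 + s.im ^ 2) ^ δ := by
        gcongr
        linarith [abs_nonneg C₂]
  · calc _ ≤ C₁ + |C₂| := (hsmall s hs hs2 h).trans (by linarith [le_abs_self C₂])
      _ ≤ (C₁ + |C₂|) * (1 + s.im ^ 2) ^ δ := le_mul_of_one_le_right (by positivity) hone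

end DirichletSeries

section MellinInversion

open MeasureTheory

variable {a : ℕ → ℂ} {f : ℝ → ℂ} {c y : ℝ}

theorem integrable_cpow_mul_mellin (hf : Complex.VerticalIntegrable (mellin f) c) (hy : 0 < y) :
    Integrable fun t : ℝ ↦
      (y : ℂ) ^ (c + t * Complex.I) * mellin f (c + t * Complex.I) := by
  refine hf.bdd_mul (c := y ^ c) ?_ (ae_of_all _ fun t ↦ ?_)
  · exact (Continuous.const_cpow (by fun_prop)
      (Or.inl (by exact_mod_cast hy.ne'))).aestronglyMeasurable
  · simp [Complex.norm_cpow_eq_rpow_re_of_pos hy]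

theorem continuous_LSeries_term_vertical (a : ℕ → ℂ) (c : ℝ) (n : ℕ) :
    Continuous fun t : ℝ ↦ LSeries.term a (c + t * Complex.I) n := by
  rcases eq_or_ne n 0 with rfl | hn
  · simpa using continuous_const
  · have hn0 : (n : ℂ) ≠ 0 := by exact_mod_cast hn
    simp_rw [LSeries.term_of_ne_zero hn]
    exact continuous_const.div (Continuous.const_cpow (by fun_prop) (Or.inl hn0)) fun _ ↦
      Complex.cpow_ne_zero_iff.2 (Or.inl hn0)

theorem norm_LSeries_term_vertical (a : ℕ → ℂ) (c : ℝ) (n : ℕ) (t : ℝ) :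
    ‖LSeries.term a (c + t * Complex.I) n‖ = ‖LSeries.term a c n‖ := by
  simp [LSeries.norm_term_eq]

theorem mul_eq_integral_LSeries_term_mul_mellin (ha : a 0 = 0) (hy : 0 < y)
    (hf : ∀ u, 0 < u → ContinuousAt f u) (hconv : MellinConvergent f c)
    (hint : Complex.VerticalIntegrable (mellin f) c) (n : ℕ) :
    a n * f (n / y) = (1 / (2 * Real.pi) : ℝ) * ∫ t : ℝ, LSeries.term a (c + t * Complex.I) n *
      ((y : ℂ) ^ (c + t * Complex.I) * mellin f (c + t * Complex.I)) := by
  rcases Nat.eq_zero_or_pos n with rfl | hn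
  · simp [ha]
  have hn0 : (0 : ℝ) < n := by exact_mod_cast hn
  have hu : 0 < n / y := div_pos hn0 hy
  rw [← mellinInv_mellin_eq c f hu hconv hint (hf _ hu), mellinInv, Complex.real_smul,
    mul_left_comm, ← integral_const_mul]
  congr 2 with t
  have hcpow : (((n / y : ℝ) : ℂ)) ^ (-((c : ℂ) + t * Complex.I)) =
      ((n : ℂ) ^ ((c : ℂ) + t * Complex.I))⁻¹ * (y : ℂ) ^ ((c : ℂ) + t * Complex.I) := by
    rw [Complex.cpow_neg, Complex.ofReal_div, Complex.div_cpow_ofReal_nonneg hn0.le hy.le, inv_div,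
      Complex.ofReal_natCast, div_eq_inv_mul]
  rw [hcpow, LSeries.term_of_ne_zero hn.ne', smul_eq_mul]
  ring

theorem tsum_mul_eq_integral_LSeries_mul_mellin (ha : a 0 = 0) (hy : 0 < y)
    (hf : ∀ u, 0 < u → ContinuousAt f u) (hconv : MellinConvergent f c)
    (hint : Complex.VerticalIntegrable (mellin f) c) (hsum : LSeriesSummable a c) :
    ∑' n, a n * f (n / y) = (1 / (2 * Real.pi) : ℝ) * ∫ t : ℝ, LSeries a (c + t * Complex.I) *
      ((y : ℂ) ^ (c + t * Complex.I) * mellin f (c + t * Complex.I)) := by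
  have hmellin := integrable_cpow_mul_mellin hint hy
  have hterm : ∀ n, Integrable fun t : ℝ ↦ LSeries.term a (c + t * Complex.I) n *
      ((y : ℂ) ^ (c + t * Complex.I) * mellin f (c + t * Complex.I)) := fun n ↦
    hmellin.bdd_mul (continuous_LSeries_term_vertical a c n).aestronglyMeasurable
      (ae_of_all _ fun t ↦ (norm_LSeries_term_vertical a c n t).le)
  have hnorm : Summable fun n ↦ ∫ t : ℝ, ‖LSeries.term a (c + t * Complex.I) n *
      ((y : ℂ) ^ (c + t * Complex.I) * mellin f (c + t * Complex.I))‖ := by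
    simp_rw [norm_mul _ (_ * _), norm_LSeries_term_vertical, integral_const_mul]
    exact hsum.norm.mul_right _
  simp_rw [mul_eq_integral_LSeries_term_mul_mellin ha hy hf hconv hint]
  rw [tsum_mul_left, integral_tsum_of_summable_integral_norm hterm hnorm]
  simp_rw [tsum_mul_right, LSeries]

end MellinInversion

section LogKernel

/-- The weight `u ↦ log⁺ u / u²`, through which the square terms `a = 2` of `Δ(x) / log x - Δ̃(x)`
depend on `p / √x`. -/
noncomputable def logKernel (u : ℝ) : ℝ := Real.log (max u 1) / u ^ 2

theorem logKernel_of_one_le {u : ℝ} (hu : 1 ≤ u) : logKernel u = Real.log u / u ^ 2 := by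
  rw [logKernel, max_eq_left hu]

theorem logKernel_of_le_one {u : ℝ} (hu : u ≤ 1) : logKernel u = 0 := by
  rw [logKernel, max_eq_right hu, Real.log_one, zero_div]

theorem logKernel_nonneg (u : ℝ) : 0 ≤ logKernel u :=
  div_nonneg (Real.log_nonneg (le_max_right _ _)) (sq_nonneg _)

theorem continuousAt_logKernel {u : ℝ} (hu : u ≠ 0) : ContinuousAt logKernel u := by
  have hmax : max u 1 ≠ 0 := (one_pos.trans_le (le_max_right u 1)).ne'
  exact ContinuousAt.div (ContinuousAt.log (by fun_prop) hmax) (by fun_prop) (pow_ne_zero 2 hu)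

theorem integrableOn_log_pow_mul_cpow (k : ℕ) {s : ℂ} (hs : s.re < -1) :
    MeasureTheory.IntegrableOn (fun x : ℝ ↦ (Real.log x : ℂ) ^ k * (x : ℂ) ^ s) (Set.Ioi 1) := by
  obtain ⟨C, -, hC⟩ := exists_norm_log_pow_mul_cpow_le k (δ := -(s.re + 1) / 2) (by linarith)
  refine ((integrableOn_Ioi_rpow_of_lt (a := s.re + -(s.re + 1) / 2) (by linarith)
    one_pos).const_mul C).mono' (ContinuousOn.aestronglyMeasurable (fun x hx ↦ ?_)
      measurableSet_Ioi) ?_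
  · exact (hasDerivAt_log_pow_mul_cpow k s (one_pos.trans hx)).continuousAt.continuousWithinAt
  · filter_upwards [MeasureTheory.ae_restrict_mem measurableSet_Ioi] with x hx
    exact hC s x (le_of_lt hx)

theorem cpow_smul_logKernel_eq_indicator (s : ℂ) (u : ℝ) :
    (u : ℂ) ^ (s - 1) • (logKernel u : ℂ) =
      (Set.Ioi 1).indicator (fun u : ℝ ↦ (Real.log u : ℂ) ^ 1 * (u : ℂ) ^ (-(3 - s))) u := by
  by_cases hu : u ∈ Set.Ioi (1 : ℝ)
  · have hu0 : (u : ℂ) ≠ 0 := by exact_mod_cast (one_pos.trans hu).ne'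
    have hexp : -(3 - s) = (s - 1) - (2 : ℕ) := by push_cast; ring
    rw [Set.indicator_of_mem hu, logKernel_of_one_le (le_of_lt hu), hexp,
      Complex.cpow_sub (s - 1) _ hu0, smul_eq_mul, Complex.cpow_natCast]
    push_cast
    ring
  · rw [Set.indicator_of_notMem hu, logKernel_of_le_one (not_lt.1 hu)]
    simp

theorem hasMellin_logKernel {s : ℂ} (hs : s.re < 2) :
    HasMellin (fun u ↦ (logKernel u : ℂ)) s (1 / (2 - s) ^ 2) := by
  have hre : 1 < (3 - s).re := by simp; linarith
  have hne : 3 - s ≠ 1 := by rintro h; simp [h] at hre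
  have hintegrable := integrableOn_log_pow_mul_cpow 1 (s := -(3 - s)) (by simp; linarith)
  refine ⟨?_, ?_⟩
  · simp_rw [MellinConvergent, cpow_smul_logKernel_eq_indicator]
    exact (hintegrable.integrable_indicator measurableSet_Ioi).integrableOn
  · simp_rw [mellin, cpow_smul_logKernel_eq_indicator]
    rw [MeasureTheory.setIntegral_indicator measurableSet_Ioi,
      Set.inter_eq_self_of_subset_right (Set.Ioi_subset_Ioi zero_le_one),
      MeasureTheory.integral_Ioi_of_hasDerivAt_of_tendsto
        (hasDerivAt_logPowAntideriv hne 1 one_pos).continuousAt.continuousWithinAt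
        (fun u hu ↦ hasDerivAt_logPowAntideriv hne 1 (one_pos.trans hu)) hintegrable
        (tendsto_logPowAntideriv 1 hre)]
    have hsub : (2 : ℂ) - s ≠ 0 := fun h ↦ hne (by linear_combination h)
    have hsub' : 1 - (3 - s) ≠ 0 := fun h ↦ hsub (by linear_combination -h)
    simp only [logPowAntideriv, Real.log_one, Complex.ofReal_zero, Complex.ofReal_one,
      Complex.one_cpow]
    field_simp
    ring

theorem norm_mellin_logKernel_le {c : ℝ} (hc : c ≤ 7 / 4) (t : ℝ) :
    ‖mellin (fun u ↦ (logKernel u : ℂ)) (c + t * Complex.I)‖ ≤ 16 * (1 + t ^ 2)⁻¹ := by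
  have hnorm : ‖(2 : ℂ) - (c + t * Complex.I)‖ ^ 2 = (2 - c) ^ 2 + t ^ 2 := by
    rw [← Complex.normSq_eq_norm_sq, Complex.normSq_apply]
    simp
    ring
  rw [(hasMellin_logKernel (by simp; linarith)).2, norm_div, norm_one, norm_pow, hnorm,
    ← div_eq_mul_inv, div_le_div_iff₀ (by nlinarith [sq_nonneg t]) (by positivity)]
  nlinarith [sq_nonneg t]

theorem verticalIntegrable_mellin_logKernel {c : ℝ} (hc : c ≤ 7 / 4) :
    Complex.VerticalIntegrable (mellin fun u ↦ (logKernel u : ℂ)) c := by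
  have hre : ∀ t : ℝ, ((c : ℂ) + t * Complex.I).re < 2 := fun t ↦ by simp; linarith
  refine (integrable_inv_one_add_sq.const_mul 16).mono' ?_
    (MeasureTheory.ae_of_all _ (norm_mellin_logKernel_le hc))
  simp_rw [fun t ↦ (hasMellin_logKernel (hre t)).2]
  refine Continuous.aestronglyMeasurable
    (continuous_const.div (by fun_prop) fun t ↦ pow_ne_zero 2 fun h ↦ ?_)
  have := hre t
  rw [← sub_eq_zero.1 h] at this
  simp at this

open ArithmeticFunction (vonMangoldt)

theorem exists_norm_integral_LSeries_mul_mellin_logKernel_le :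
    ∃ C, 0 < C ∧ ∀ y c : ℝ, 0 < y → 1 < c → c ≤ 7 / 4 →
      ‖∫ t : ℝ, LSeries (LSeries.logMul fun n ↦ (vonMangoldt n : ℂ) - 1) (c + t * Complex.I) *
        ((y : ℂ) ^ (c + t * Complex.I) *
          mellin (fun u ↦ (logKernel u : ℂ)) (c + t * Complex.I))‖ ≤ C * y ^ c := by
  obtain ⟨C, hC, hL⟩ := exists_norm_LSeries_logMul_vonMangoldt_sub_one_le (δ := 1 / 4)
    (by norm_num)
  have hintegrable : MeasureTheory.Integrable fun t : ℝ ↦ (1 + t ^ 2) ^ (-3 / 4 : ℝ) := by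
    convert integrable_rpow_neg_one_add_norm_sq (E := ℝ) (μ := MeasureTheory.volume)
      (r := 3 / 2) (by simp; norm_num) using 2 with t
    rw [Real.norm_eq_abs, sq_abs]
    norm_num
  have : 0 ≤ ∫ t : ℝ, (1 + t ^ 2) ^ (-3 / 4 : ℝ) :=
    MeasureTheory.integral_nonneg fun t ↦ by positivity
  refine ⟨16 * C * ((∫ t : ℝ, (1 + t ^ 2) ^ (-3 / 4 : ℝ)) + 1), by positivity,
    fun y c hy hc1 hc ↦ ?_⟩
  refine (MeasureTheory.norm_integral_le_of_norm_le (hintegrable.const_mul (16 * C * y ^ c))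
    (MeasureTheory.ae_of_all _ fun t ↦ ?_)).trans ?_
  · have hline := hL (c + t * Complex.I) (by simpa using hc1) (by simp; linarith)
    rw [show ((c : ℂ) + t * Complex.I).im = t by simp] at hline
    rw [norm_mul, norm_mul, Complex.norm_cpow_eq_rpow_re_of_pos hy,
      show ((c : ℂ) + t * Complex.I).re = c by simp]
    calc _ ≤ C * (1 + t ^ 2) ^ (1 / 4 : ℝ) * (y ^ c * (16 * (1 + t ^ 2)⁻¹)) := by
          gcongr
          exact norm_mellin_logKernel_le hc t
      _ = 16 * C * y ^ c * ((1 + t ^ 2) ^ (1 / 4 : ℝ) * (1 + t ^ 2) ^ (-1 : ℝ)) := by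
          rw [Real.rpow_neg_one]; ring
      _ = _ := by rw [← Real.rpow_add (by positivity)]; norm_num
  · rw [MeasureTheory.integral_const_mul]
    have : 0 < C * y ^ c := by positivity
    linarith

theorem exists_abs_tsum_vonMangoldt_sub_one_mul_log_mul_logKernel_le_rpow :
    ∃ C, 0 < C ∧ ∀ y c : ℝ, 0 < y → 1 < c → c ≤ 7 / 4 →
      |∑' n : ℕ, (vonMangoldt n - 1) * Real.log n * logKernel (n / y)| ≤ C * y ^ c := by
  obtain ⟨C, hC, hbound⟩ := exists_norm_integral_LSeries_mul_mellin_logKernel_le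
  refine ⟨1 / (2 * Real.pi) * C, by positivity, fun y c hy hc1 hc ↦ ?_⟩
  have hmellin := tsum_mul_eq_integral_LSeries_mul_mellin (c := c)
    (f := fun u ↦ (logKernel u : ℂ)) (a := LSeries.logMul fun n ↦ (vonMangoldt n : ℂ) - 1)
    (by simp [LSeries.logMul]) hy
    (fun u hu ↦ Complex.continuous_ofReal.continuousAt.comp (continuousAt_logKernel hu.ne'))
    (hasMellin_logKernel (by simp; linarith)).1 (verticalIntegrable_mellin_logKernel hc)
    (LSeriesSummable_logMul_vonMangoldt_sub_one (by simpa using hc1))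
  have hcast : ((∑' n : ℕ, (vonMangoldt n - 1) * Real.log n * logKernel (n / y) : ℝ) : ℂ) =
      ∑' n, LSeries.logMul (fun n ↦ (vonMangoldt n : ℂ) - 1) n * (logKernel (n / y) : ℂ) := by
    rw [Complex.ofReal_tsum]
    refine tsum_congr fun n ↦ ?_
    rw [LSeries.logMul]
    push_cast
    ring
  rw [← Real.norm_eq_abs, ← Complex.norm_real, hcast, hmellin, norm_mul, Complex.norm_real,
    Real.norm_of_nonneg (by positivity), mul_assoc]
  gcongr
  exact hbound y c hy hc1 hc

theorem log_two_div_two_le_log {y : ℝ} (hy : 2 ≤ y ^ 2) :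
    Real.log 2 / 2 ≤ Real.log y := by
  have hlog := Real.log_le_log two_pos hy
  rw [Real.log_pow] at hlog
  push_cast at hlog
  linarith

theorem exists_abs_tsum_vonMangoldt_sub_one_mul_log_mul_logKernel_le :
    ∃ C, 0 < C ∧ ∀ y : ℝ, 0 < y → 2 ≤ y ^ 2 →
      |∑' n : ℕ, (vonMangoldt n - 1) * Real.log n * logKernel (n / y)| ≤ C * y := by
  obtain ⟨C, hC, hbound⟩ := exists_abs_tsum_vonMangoldt_sub_one_mul_log_mul_logKernel_le_rpow
  refine ⟨C * Real.exp (1 / 4), by positivity, fun y hy0 hy ↦ ?_⟩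
  have hlog : 1 / 3 ≤ Real.log y := by
    linarith [log_two_div_two_le_log hy, Real.log_two_gt_d9]
  have : 0 < Real.log y := by linarith
  -- On the line `Re s = 1 + 1 / (4 log y)` the factor `y ^ s` is `O(y)`.
  refine (hbound y (1 + 1 / (4 * Real.log y)) hy0 ?_ ?_).trans_eq ?_
  · rw [lt_add_iff_pos_right]
    positivity
  · have : 1 / (4 * Real.log y) ≤ 3 / 4 := by
      rw [div_le_div_iff₀ (by positivity) (by norm_num)]
      linarith
    linarith
  · rw [Real.rpow_add hy0, Real.rpow_one, Real.rpow_def_of_pos hy0,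
      show Real.log y * (1 / (4 * Real.log y)) = 1 / 4 by field_simp]
    ring

end LogKernel

section LogSum

theorem logPowAntideriv_two_one (x : ℝ) :
    logPowAntideriv 2 1 x = ((-(Real.log x + 1) / x : ℝ) : ℂ) := by
  simp only [logPowAntideriv, show (1 : ℂ) - 2 = -1 by norm_num, Complex.cpow_neg_one]
  push_cast
  ring

theorem logPowAntideriv_two_two (x : ℝ) :
    logPowAntideriv 2 2 x = ((-(Real.log x ^ 2 + 2 * Real.log x + 2) / x : ℝ) : ℂ) := by
  rw [logPowAntideriv, logPowAntideriv_two_one, show (1 : ℂ) - 2 = -1 by norm_num,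
    Complex.cpow_neg_one]
  push_cast
  ring

theorem ofReal_log_pow_div_sq (k n : ℕ) :
    ((Real.log n ^ k / (n : ℝ) ^ 2 : ℝ) : ℂ) = (Real.log n : ℂ) ^ k * (n : ℂ) ^ (-2 : ℂ) := by
  rw [Complex.cpow_neg, Complex.cpow_ofNat, div_eq_mul_inv]
  push_cast
  rfl

theorem summable_log_pow_div_sq (k : ℕ) :
    Summable fun n : ℕ ↦ Real.log n ^ k / (n : ℝ) ^ 2 := by
  rw [← Complex.summable_ofReal]
  simpa only [ofReal_log_pow_div_sq] using summable_log_pow_mul_cpow k (s := 2) (by simp)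

theorem exists_abs_tsum_log_pow_div_sq_add_le (k : ℕ) :
    ∃ C, 0 < C ∧ ∀ N : ℕ, 1 ≤ N →
      |∑' n : ℕ, Real.log (n + N : ℕ) ^ k / ((n + N : ℕ) : ℝ) ^ 2 + (logPowAntideriv 2 k N).re| ≤
        C * (N : ℝ) ^ (-3 / 2 : ℝ) := by
  obtain ⟨C, hC, h⟩ :=
    exists_norm_tsum_log_pow_mul_cpow_add_le k (δ := 1 / 2) (by norm_num) (by norm_num)
  refine ⟨C * 3, by positivity, fun N hN ↦ ?_⟩
  have hN' := h 2 (by simp) N hN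
  simp only [← ofReal_log_pow_div_sq, ← Complex.ofReal_tsum] at hN'
  refine (le_of_eq_of_le ?_ (Complex.abs_re_le_norm _)).trans (hN'.trans_eq ?_)
  · rw [Complex.add_re, Complex.ofReal_re]
  · norm_num

/-- The fractions are the values at `N` of antiderivatives of `-log² u / u²` and `-log u / u²`, so
that the left term is the main term of `y² ∑_{n ≥ N} log n log (n / y) / n²`. -/
theorem abs_sq_mul_antideriv_sub_mul_log_le {y N : ℝ} (hy : 1 ≤ y) (hyN : y ≤ N) (hNy : N ≤ y + 1) :
    |y ^ 2 * ((Real.log N ^ 2 + 2 * Real.log N + 2) / N -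
      Real.log y * ((Real.log N + 1) / N)) - y * Real.log y| ≤ 7 * y := by
  have hy0 : 0 < y := by linarith
  have hN0 : 0 < N := by linarith
  have hl0 : 0 ≤ Real.log y := Real.log_nonneg hy
  have hly : Real.log y ≤ y := (Real.log_le_sub_one_of_pos hy0).trans (by linarith)
  obtain ⟨v, hv⟩ : ∃ v, Real.log N = Real.log y + v :=
    ⟨Real.log N - Real.log y, by ring⟩
  have hv0 : 0 ≤ v := by
    have := Real.log_le_log hy0 hyN
    linarith
  have hvy : v * y ≤ 1 := by
    have h1 := Real.log_le_sub_one_of_pos (div_pos hN0 hy0)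
    rw [Real.log_div hN0.ne' hy0.ne', hv, le_sub_iff_add_le, le_div_iff₀ hy0] at h1
    linarith
  have hv1 : v ≤ 1 := by nlinarith
  have heq : y ^ 2 * ((Real.log N ^ 2 + 2 * Real.log N + 2) / N -
      Real.log y * ((Real.log N + 1) / N)) - y * Real.log y =
      (y ^ 2 * (v ^ 2 + 2 * v + 2) + y * Real.log y * (v * y) - y * Real.log y * (N - y)) / N := by
    rw [hv]
    field_simp
    ring
  rw [heq, abs_div, abs_of_pos hN0, div_le_iff₀ hN0, abs_le]
  set ℓ := Real.log y
  have hyl0 : 0 ≤ y * ℓ := by positivity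
  have hyl : y * ℓ ≤ y * N := by gcongr; linarith
  have hyy : y ^ 2 ≤ y * N := by rw [sq]; gcongr
  have hgap_le : y * ℓ * (N - y) ≤ y * ℓ := mul_le_of_le_one_right hyl0 (by linarith)
  have hgap : 0 ≤ y * ℓ * (N - y) := mul_nonneg hyl0 (by linarith)
  have hcross_le : y * ℓ * (v * y) ≤ y * ℓ := mul_le_of_le_one_right hyl0 hvy
  have hcross : 0 ≤ y * ℓ * (v * y) := by positivity
  have hquad_le : y ^ 2 * (v ^ 2 + 2 * v + 2) ≤ y ^ 2 * 5 := by gcongr; nlinarith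
  have hquad : 0 ≤ y ^ 2 * (v ^ 2 + 2 * v + 2) := by positivity
  constructor <;> linarith

theorem log_mul_logKernel_div {x y : ℝ} (hy : 0 < y) (hyx : y ≤ x) :
    Real.log x * logKernel (x / y) =
      y ^ 2 * (Real.log x ^ 2 / x ^ 2 - Real.log y * (Real.log x ^ 1 / x ^ 2)) := by
  have hx : 0 < x := hy.trans_le hyx
  rw [logKernel_of_one_le ((one_le_div hy).2 hyx), Real.log_div hx.ne' hy.ne']
  field_simp

theorem tsum_log_mul_logKernel_eq {y : ℝ} (hy : 0 < y) :
    ∑' n : ℕ, Real.log n * logKernel (n / y) =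
      y ^ 2 * (∑' n : ℕ, Real.log (n + ⌈y⌉₊ : ℕ) ^ 2 / ((n + ⌈y⌉₊ : ℕ) : ℝ) ^ 2 -
        Real.log y * ∑' n : ℕ, Real.log (n + ⌈y⌉₊ : ℕ) ^ 1 / ((n + ⌈y⌉₊ : ℕ) : ℝ) ^ 2) := by
  set N := ⌈y⌉₊
  have hsum (k : ℕ) := (summable_nat_add_iff N).2 (summable_log_pow_div_sq k)
  have htail (n : ℕ) : Real.log (n + N : ℕ) * logKernel ((n + N : ℕ) / y) = _ :=
    log_mul_logKernel_div hy ((Nat.le_ceil y).trans (by simp [N]))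
  have hhead : ∀ n ∈ Finset.range N, Real.log n * logKernel (n / y) = 0 := fun n hn ↦ by
    rw [logKernel_of_le_one, mul_zero]
    exact (div_le_one hy).2 (Nat.lt_ceil.1 (Finset.mem_range.1 hn)).le
  have hsum' : Summable fun n : ℕ ↦ Real.log n * logKernel (n / y) := by
    rw [← summable_nat_add_iff N]
    simp only [htail]
    exact ((hsum 2).sub ((hsum 1).mul_left _)).mul_left _
  rw [← hsum'.sum_add_tsum_nat_add N, Finset.sum_eq_zero hhead, zero_add]
  simp only [htail]
  rw [tsum_mul_left, (hsum 2).tsum_sub ((hsum 1).mul_left _), tsum_mul_left]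

theorem exists_sq_mul_add_log_mul_mul_rpow_le {a b : ℝ} (ha : 0 ≤ a) (hb : 0 ≤ b) :
    ∃ C, 0 ≤ C ∧ ∀ y N : ℝ, 1 ≤ y → y ≤ N →
      y ^ 2 * (a + Real.log y * b) * N ^ (-3 / 2 : ℝ) ≤ C * y := by
  obtain ⟨A, hA, hlog⟩ := exists_log_pow_le_rpow 1 (δ := 1 / 2) (by norm_num)
  refine ⟨a + A * b, by positivity, fun y N hy hN ↦ ?_⟩
  have hy0 : 0 < y := by linarith
  have hlog0 := Real.log_nonneg hy
  have hone : 1 ≤ y ^ (1 / 2 : ℝ) := Real.one_le_rpow hy (by norm_num)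
  calc _ ≤ y ^ 2 * (a + Real.log y * b) * y ^ (-3 / 2 : ℝ) := by
        gcongr _ * ?_
        exact Real.rpow_le_rpow_of_nonpos hy0 hN (by norm_num)
    _ = (a + Real.log y * b) * y ^ (1 / 2 : ℝ) := by
        rw [mul_comm (y ^ 2), mul_assoc, ← Real.rpow_natCast, ← Real.rpow_add hy0]
        norm_num
    _ ≤ (a * y ^ (1 / 2 : ℝ) + A * y ^ (1 / 2 : ℝ) * b) * y ^ (1 / 2 : ℝ) := by
        gcongr
        · exact le_mul_of_one_le_right ha hone
        · simpa using hlog y hy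
    _ = (a + A * b) * (y ^ (1 / 2 : ℝ) * y ^ (1 / 2 : ℝ)) := by ring
    _ = (a + A * b) * y := by rw [← Real.rpow_add hy0]; norm_num

theorem exists_abs_tsum_log_mul_logKernel_sub_le :
    ∃ C, 0 < C ∧ ∀ y : ℝ, 1 ≤ y →
      |∑' n : ℕ, Real.log n * logKernel (n / y) - y * Real.log y| ≤ C * y := by
  obtain ⟨C₁, hC₁, h₁⟩ := exists_abs_tsum_log_pow_div_sq_add_le 1
  obtain ⟨C₂, hC₂, h₂⟩ := exists_abs_tsum_log_pow_div_sq_add_le 2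
  obtain ⟨A, hA0, hA⟩ := exists_sq_mul_add_log_mul_mul_rpow_le hC₂.le hC₁.le
  refine ⟨A + 7, by positivity, fun y hy ↦ ?_⟩
  have hy0 : 0 < y := by linarith
  have hl0 : 0 ≤ Real.log y := Real.log_nonneg hy
  rw [tsum_log_mul_logKernel_eq hy0]
  set N := ⌈y⌉₊
  have hN : 1 ≤ N := Nat.one_le_ceil_iff.2 hy0
  have h₁ := h₁ N hN
  have h₂ := h₂ N hN
  have hmain := abs_sq_mul_antideriv_sub_mul_log_le hy (Nat.le_ceil y)
    (Nat.ceil_lt_add_one hy0.le).le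
  rw [logPowAntideriv_two_one, Complex.ofReal_re] at h₁
  rw [logPowAntideriv_two_two, Complex.ofReal_re] at h₂
  have herror := hA y N hy (Nat.le_ceil y)
  generalize ∑' n : ℕ, Real.log (n + N : ℕ) ^ 1 / ((n + N : ℕ) : ℝ) ^ 2 = S₁ at *
  generalize ∑' n : ℕ, Real.log (n + N : ℕ) ^ 2 / ((n + N : ℕ) : ℝ) ^ 2 = S₂ at *
  calc _ = |y ^ 2 * ((S₂ + -(Real.log N ^ 2 + 2 * Real.log N + 2) / N) -
          Real.log y * (S₁ + -(Real.log N + 1) / N)) +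
        (y ^ 2 * ((Real.log N ^ 2 + 2 * Real.log N + 2) / N -
          Real.log y * ((Real.log N + 1) / N)) - y * Real.log y)| := by congr 1; ring
    _ ≤ y ^ 2 * (C₂ * (N : ℝ) ^ (-3 / 2 : ℝ) + Real.log y * (C₁ * (N : ℝ) ^ (-3 / 2 : ℝ))) +
        7 * y := by
      refine (abs_add_le _ _).trans (add_le_add ?_ hmain)
      rw [abs_mul, abs_of_nonneg (sq_nonneg y)]
      refine mul_le_mul_of_nonneg_left ((abs_sub _ _).trans (add_le_add h₂ ?_)) (sq_nonneg y)
      rw [abs_mul, abs_of_nonneg hl0]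
      gcongr
    _ ≤ _ := by linarith

end LogSum

section ChebyshevBounds

open ArithmeticFunction (vonMangoldt vonMangoldt_nonneg vonMangoldt_le_log)

theorem mul_rpow_neg_sub_le {s x y : ℝ} (hs : 1 < s) (hx : 0 < x) (hy : 0 < y) :
    x * (x ^ (-s) - y ^ (-s)) ≤ s / (s - 1) * (x ^ (1 - s) - y ^ (1 - s)) := by
  have hbernoulli : (1 + s * (y / x - 1)) * y ^ (-s) ≤ x ^ (-s) :=
    calc _ ≤ (1 + (y / x - 1)) ^ s * y ^ (-s) := by
          gcongr
          exact one_add_mul_self_le_rpow_one_add (by linarith [div_pos hy hx]) hs.le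
      _ = x ^ (-s) := by
          rw [add_sub_cancel, Real.div_rpow hy.le hx.le, Real.rpow_neg hy.le, Real.rpow_neg hx.le]
          field_simp
  have hmul : (x + s * (y - x)) * y ^ (-s) ≤ x * x ^ (-s) :=
    (mul_le_mul_of_nonneg_left hbernoulli hx.le).trans_eq' (by field_simp)
  rw [sub_eq_add_neg 1 s, Real.rpow_add hx, Real.rpow_add hy, Real.rpow_one, Real.rpow_one,
    div_mul_eq_mul_div, le_div_iff₀ (by linarith)]
  linarith

theorem sum_Ioc_mul_rpow_neg_le {a : ℕ → ℝ} {c s : ℝ} (hs : 1 < s) (ha : ∀ n, 0 ≤ a n)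
    (hsum : ∀ N : ℕ, ∑ n ∈ Finset.Ioc 0 N, a n ≤ c * N) {M : ℕ} (hM : 0 < M) (N : ℕ) :
    ∑ n ∈ Finset.Ioc M N, a n * (n : ℝ) ^ (-s) ≤ s / (s - 1) * c * (M : ℝ) ^ (1 - s) := by
  have hs' : 0 < s - 1 := by linarith
  have hc : 0 ≤ c := by simpa using (Finset.sum_nonneg fun n _ ↦ ha n).trans (hsum 1)
  rcases le_total N M with hNM | hMN
  · rw [Finset.Ioc_eq_empty (by lia), Finset.sum_empty]
    positivity
  have habel : ∑ n ∈ Finset.Ioc M N, a n * (n : ℝ) ^ (-s) ≤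
      (∑ n ∈ Finset.Ioc 0 N, a n) * (N : ℝ) ^ (-s) +
        s / (s - 1) * c * ((M : ℝ) ^ (1 - s) - (N : ℝ) ^ (1 - s)) := by
    induction N, hMN using Nat.le_induction with
    | base =>
      simp only [Finset.Ioc_self, Finset.sum_empty, sub_self, mul_zero, add_zero]
      exact mul_nonneg (Finset.sum_nonneg fun n _ ↦ ha n) (by positivity)
    | succ N hN ih =>
      have hN0 : (0 : ℝ) < N := by exact_mod_cast hM.trans_le hN
      have hstep := mul_le_mul_of_nonneg_left
        (mul_rpow_neg_sub_le hs hN0 (y := (N + 1 : ℕ)) (by positivity)) hc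
      have hdecr : (0 : ℝ) ≤ (N : ℝ) ^ (-s) - ((N + 1 : ℕ) : ℝ) ^ (-s) := sub_nonneg.2 <|
        Real.rpow_le_rpow_of_nonpos hN0 (by push_cast; linarith) (by linarith)
      have hpartial := mul_le_mul_of_nonneg_right (hsum N) hdecr
      rw [Finset.sum_Ioc_succ_top (by lia), Finset.sum_Ioc_succ_top (Nat.zero_le N)]
      linarith
  have hlast : (∑ n ∈ Finset.Ioc 0 N, a n) * (N : ℝ) ^ (-s) ≤
      s / (s - 1) * c * (N : ℝ) ^ (1 - s) := by
    have hN0 : (0 : ℝ) < N := by exact_mod_cast hM.trans_le hMN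
    calc _ ≤ c * N * (N : ℝ) ^ (-s) := by gcongr; exact hsum N
      _ = 1 * c * (N : ℝ) ^ (1 - s) := by
        rw [sub_eq_add_neg, Real.rpow_add hN0, Real.rpow_one]; ring
      _ ≤ _ := by
        gcongr
        rw [le_div_iff₀ hs']
        linarith
  linarith

theorem exists_sum_Ioc_floor_vonMangoldt_mul_rpow_le :
    ∃ C, 0 < C ∧ ∀ y : ℝ, 1 ≤ y → ∀ N : ℕ,
      ∑ n ∈ Finset.Ioc ⌊y⌋₊ N, vonMangoldt n * (n : ℝ) ^ (-(3 / 2) : ℝ) ≤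
        C * y ^ (-(1 / 2) : ℝ) := by
  have : 0 < Real.log 4 := Real.log_pos (by norm_num)
  refine ⟨3 * (Real.log 4 + 4) * 2 ^ (1 / 2 : ℝ), by positivity, fun y hy N ↦ ?_⟩
  have hM : 0 < ⌊y⌋₊ := Nat.floor_pos.2 hy
  have hpsi : ∀ N : ℕ, ∑ n ∈ Finset.Ioc 0 N, vonMangoldt n ≤ (Real.log 4 + 4) * N := fun N ↦ by
    simpa [Chebyshev.psi] using Chebyshev.psi_le_const_mul_self (Nat.cast_nonneg N)
  have hfloor : y / 2 ≤ ⌊y⌋₊ := by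
    have hlt := Nat.lt_floor_add_one y
    have hone : (1 : ℝ) ≤ ⌊y⌋₊ := by exact_mod_cast hM
    linarith
  calc _ ≤ 3 / 2 / (3 / 2 - 1) * (Real.log 4 + 4) * (⌊y⌋₊ : ℝ) ^ (1 - 3 / 2 : ℝ) :=
        sum_Ioc_mul_rpow_neg_le (by norm_num) (fun _ ↦ vonMangoldt_nonneg) hpsi hM N
    _ ≤ 3 / 2 / (3 / 2 - 1) * (Real.log 4 + 4) * (y / 2) ^ (1 - 3 / 2 : ℝ) := by
        gcongr ?_ * ?_
        exact Real.rpow_le_rpow_of_nonpos (by positivity) hfloor (by norm_num)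
    _ = _ := by
        rw [Real.div_rpow (by linarith) (by norm_num), div_eq_mul_inv (y ^ _),
          ← Real.rpow_neg (by norm_num)]
        norm_num
        ring

theorem vonMangoldt_mul_log_nonneg (n : ℕ) : 0 ≤ vonMangoldt n * Real.log n :=
  mul_nonneg vonMangoldt_nonneg (Real.log_natCast_nonneg n)

theorem exists_vonMangoldt_mul_log_le {δ : ℝ} (hδ : 0 < δ) :
    ∃ C, 0 < C ∧ ∀ n : ℕ, vonMangoldt n * Real.log n ≤ C * (n : ℝ) ^ δ := by
  obtain ⟨C, hC, hlog⟩ := exists_log_pow_le_rpow 2 hδ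
  refine ⟨C, hC, fun n ↦ ?_⟩
  rcases Nat.eq_zero_or_pos n with rfl | hn
  · simp [hδ.ne']
  refine le_trans ?_ (hlog n (by exact_mod_cast hn))
  rw [sq]
  exact mul_le_mul_of_nonneg_right vonMangoldt_le_log (Real.log_natCast_nonneg n)

theorem summable_nonprime_vonMangoldt_mul_log_div :
    Summable fun n : ℕ ↦ if n.Prime then 0 else vonMangoldt n * Real.log n / n := by
  obtain ⟨C, -, hlog⟩ := exists_log_pow_le_rpow 1 (δ := 1 / 4) (by norm_num)
  have hpartial : (fun N : ℕ ↦ ∑ n ∈ Finset.Icc 1 N, if n.Prime then 0 else vonMangoldt n)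
      =O[atTop] fun N : ℕ ↦ (N : ℝ) ^ (1 / 2 : ℝ) := by
    refine (Chebyshev.isBigO_psi_sub_theta_sqrt.comp_tendsto tendsto_natCast_atTop_atTop).congr
      (fun N ↦ ?_) fun N ↦ Real.sqrt_eq_rpow _
    rw [Function.comp_apply, Pi.sub_apply, Chebyshev.psi_sub_theta_eq_sum_not_prime,
      Nat.floor_natCast, Finset.sum_filter]
    simp only [ite_not]
    rfl
  have hseries := LSeriesSummable_of_sum_norm_bigO_and_nonneg (s := (3 / 4 : ℝ)) hpartial
    (fun n ↦ by split_ifs <;> simp [vonMangoldt_nonneg]) (by norm_num)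
    (by rw [Complex.ofReal_re]; norm_num)
  refine Summable.of_nonneg_of_le (fun n ↦ ?_) (fun n ↦ ?_) (hseries.norm.mul_left C)
  · split_ifs
    · rfl
    · exact div_nonneg (vonMangoldt_mul_log_nonneg n) n.cast_nonneg
  rcases Nat.eq_zero_or_pos n with rfl | hn
  · simp
  split_ifs with hp
  · simp [LSeries.term, hp]
  have hn0 : (0 : ℝ) < n := by exact_mod_cast hn
  rw [LSeries.norm_term_eq, if_neg hn.ne', if_neg hp, Complex.norm_real,
    Real.norm_of_nonneg vonMangoldt_nonneg, Complex.ofReal_re, ← mul_div_assoc,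
    div_le_div_iff₀ hn0 (by positivity)]
  calc _ = vonMangoldt n * (Real.log n ^ 1 * (n : ℝ) ^ (3 / 4 : ℝ)) := by ring
    _ ≤ vonMangoldt n * (C * (n : ℝ) ^ (1 / 4 : ℝ) * (n : ℝ) ^ (3 / 4 : ℝ)) := by
        gcongr
        exact hlog n (by exact_mod_cast hn)
    _ = C * vonMangoldt n * n := by
        rw [mul_assoc C, ← Real.rpow_add hn0]
        norm_num
        ring

end ChebyshevBounds

section PrimeSum

open ArithmeticFunction (vonMangoldt vonMangoldt_nonneg vonMangoldt_apply_prime)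

theorem exists_log_pow_mul_logKernel_le (k : ℕ) {δ : ℝ} (hδ : 0 < δ) :
    ∃ C, 0 < C ∧ ∀ u : ℝ, 0 < u → Real.log u ^ k * logKernel u ≤ C * u ^ (δ - 2) := by
  obtain ⟨C, hC, h⟩ := exists_log_pow_le_rpow (k + 1) hδ
  refine ⟨C, hC, fun u hu ↦ ?_⟩
  rcases le_total u 1 with h1 | h1
  · rw [logKernel_of_le_one h1, mul_zero]
    positivity
  · rw [logKernel_of_one_le h1, ← mul_div_assoc, ← pow_succ, div_le_iff₀ (by positivity),
      mul_assoc, ← Real.rpow_natCast u 2, ← Real.rpow_add hu]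
    simpa using h u h1

theorem logKernel_le_inv {u : ℝ} (hu : 0 < u) : logKernel u ≤ u⁻¹ := by
  rcases le_total u 1 with h1 | h1
  · rw [logKernel_of_le_one h1]
    positivity
  · rw [logKernel_of_one_le h1, div_le_iff₀ (by positivity), sq, inv_mul_cancel_left₀ hu.ne']
    linarith [Real.log_le_sub_one_of_pos hu]

theorem summable_mul_logKernel {a : ℕ → ℝ} {C δ y : ℝ} (hδ : δ < 1) (hy : 0 < y)
    (ha : ∀ n : ℕ, 0 < n → |a n| ≤ C * (n : ℝ) ^ δ) :
    Summable fun n : ℕ ↦ a n * logKernel (n / y) := by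
  obtain ⟨A, -, h⟩ := exists_log_pow_mul_logKernel_le 0 (δ := (1 - δ) / 2) (by linarith)
  refine Summable.of_norm_bounded
    (g := fun n : ℕ ↦ C * A / y ^ ((1 - δ) / 2 - 2) * (n : ℝ) ^ (δ + ((1 - δ) / 2 - 2)))
    ((Real.summable_nat_rpow.2 (by linarith)).mul_left _) fun n ↦ ?_
  rcases Nat.eq_zero_or_pos n with rfl | hn
  · rw [Nat.cast_zero, zero_div, logKernel_of_le_one zero_le_one, mul_zero, norm_zero,
      Real.zero_rpow (by linarith), mul_zero]
  have hn0 : (0 : ℝ) < n := by exact_mod_cast hn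
  have hkernel : logKernel (n / y) ≤ A * ((n : ℝ) / y) ^ ((1 - δ) / 2 - 2) := by
    simpa using h (n / y) (div_pos hn0 hy)
  rw [Real.norm_eq_abs, abs_mul, abs_of_nonneg (logKernel_nonneg _)]
  calc _ ≤ C * (n : ℝ) ^ δ * (A * ((n : ℝ) / y) ^ ((1 - δ) / 2 - 2)) :=
        mul_le_mul (ha n hn) hkernel (logKernel_nonneg _) ((abs_nonneg _).trans (ha n hn))
    _ = _ := by rw [Real.div_rpow hn0.le hy.le, Real.rpow_add hn0]; ring

theorem summable_vonMangoldt_mul_log_mul_logKernel {y : ℝ} (hy : 0 < y) :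
    Summable fun n : ℕ ↦ vonMangoldt n * Real.log n * logKernel (n / y) := by
  obtain ⟨C, -, hC⟩ := exists_vonMangoldt_mul_log_le (δ := 1 / 2) (by norm_num)
  refine summable_mul_logKernel (C := C) (δ := 1 / 2) (by norm_num) hy fun n _ ↦ ?_
  rw [abs_of_nonneg (vonMangoldt_mul_log_nonneg n)]
  exact hC n

theorem summable_log_mul_logKernel {y : ℝ} (hy : 0 < y) :
    Summable fun n : ℕ ↦ Real.log n * logKernel (n / y) := by
  obtain ⟨C, -, hC⟩ := exists_log_pow_le_rpow 1 (δ := 1 / 2) (by norm_num)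
  refine summable_mul_logKernel (δ := 1 / 2) (C := C) (by norm_num) hy fun n hn ↦ ?_
  rw [abs_of_nonneg (Real.log_natCast_nonneg n)]
  simpa using hC n (by exact_mod_cast hn)

theorem summable_prime_logKernel {y : ℝ} (hy : 0 < y) :
    Summable fun n : ℕ ↦ if n.Prime then logKernel (n / y) else 0 := by
  have := summable_mul_logKernel (a := fun n ↦ if n.Prime then 1 else 0) (C := 1) zero_lt_one hy
    fun n _ ↦ by split_ifs <;> simp
  simpa using this

theorem vonMangoldt_mul_log_div_mul_logKernel_nonneg (n : ℕ) (y : ℝ) :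
    0 ≤ vonMangoldt n * Real.log (n / y) * logKernel (n / y) := by
  rcases le_total ((n : ℝ) / y) 1 with h1 | h1
  · rw [logKernel_of_le_one h1, mul_zero]
  · exact mul_nonneg (mul_nonneg vonMangoldt_nonneg (Real.log_nonneg h1)) (logKernel_nonneg _)

theorem exists_sum_range_vonMangoldt_mul_log_div_mul_logKernel_le :
    ∃ C, 0 < C ∧ ∀ y : ℝ, 1 ≤ y → ∀ N : ℕ,
      ∑ n ∈ Finset.range N, vonMangoldt n * Real.log (n / y) * logKernel (n / y) ≤ C * y := by
  obtain ⟨A, hA, hkernel⟩ := exists_log_pow_mul_logKernel_le 1 (δ := 1 / 2) (by norm_num)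
  obtain ⟨D, hD, htail⟩ := exists_sum_Ioc_floor_vonMangoldt_mul_rpow_le
  refine ⟨A * D, by positivity, fun y hy N ↦ ?_⟩
  have hy0 : 0 < y := by linarith
  have hsupport : ∀ n ∈ Finset.range N,
      vonMangoldt n * Real.log (n / y) * logKernel (n / y) ≠ 0 → ⌊y⌋₊ < n := by
    intro n _ hne
    by_contra! hn
    refine hne ?_
    rw [logKernel_of_le_one, mul_zero]
    exact (div_le_one hy0).2 ((Nat.le_floor_iff hy0.le).1 hn)
  have hterm : ∀ n ∈ Finset.Ioc ⌊y⌋₊ N, vonMangoldt n * Real.log (n / y) * logKernel (n / y) ≤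
      A * y ^ (3 / 2 : ℝ) * (vonMangoldt n * (n : ℝ) ^ (-(3 / 2) : ℝ)) := by
    intro n hn
    have hn0 : (0 : ℝ) < n := by exact_mod_cast (Nat.zero_le _).trans_lt (Finset.mem_Ioc.1 hn).1
    calc _ = vonMangoldt n * (Real.log (n / y) ^ 1 * logKernel (n / y)) := by ring
      _ ≤ vonMangoldt n * (A * ((n : ℝ) / y) ^ (1 / 2 - 2 : ℝ)) :=
        mul_le_mul_of_nonneg_left (hkernel _ (div_pos hn0 hy0)) vonMangoldt_nonneg
      _ = _ := by
        rw [show (1 / 2 - 2 : ℝ) = -(3 / 2) by norm_num, Real.div_rpow hn0.le hy0.le,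
          Real.rpow_neg hy0.le (3 / 2)]
        field_simp
  calc _ ≤ ∑ n ∈ Finset.Ioc ⌊y⌋₊ N, vonMangoldt n * Real.log (n / y) * logKernel (n / y) := by
        rw [← Finset.sum_filter_of_ne hsupport]
        refine Finset.sum_le_sum_of_subset_of_nonneg (fun n hn ↦ ?_)
          fun n _ _ ↦ vonMangoldt_mul_log_div_mul_logKernel_nonneg n y
        rw [Finset.mem_filter, Finset.mem_range] at hn
        exact Finset.mem_Ioc.2 ⟨hn.2, hn.1.le⟩
    _ ≤ A * y ^ (3 / 2 : ℝ) * (D * y ^ (-(1 / 2) : ℝ)) := by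
        refine (Finset.sum_le_sum hterm).trans ?_
        rw [← Finset.mul_sum]
        gcongr
        exact htail y hy N
    _ = A * D * (y ^ (3 / 2 : ℝ) * y ^ (-(1 / 2) : ℝ)) := by ring
    _ = A * D * y := by rw [← Real.rpow_add hy0]; norm_num

theorem exists_abs_tsum_vonMangoldt_mul_log_mul_logKernel_sub_le :
    ∃ C, 0 < C ∧ ∀ y : ℝ, 0 < y → 2 ≤ y ^ 2 →
      |∑' n : ℕ, vonMangoldt n * Real.log n * logKernel (n / y) - y * Real.log y| ≤ C * y := by
  obtain ⟨C₁, hC₁, h₁⟩ := exists_abs_tsum_vonMangoldt_sub_one_mul_log_mul_logKernel_le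
  obtain ⟨C₂, hC₂, h₂⟩ := exists_abs_tsum_log_mul_logKernel_sub_le
  refine ⟨C₁ + C₂, by positivity, fun y hy0 hy ↦ ?_⟩
  have hsplit : ∑' n : ℕ, vonMangoldt n * Real.log n * logKernel (n / y) =
      ∑' n : ℕ, (vonMangoldt n - 1) * Real.log n * logKernel (n / y) +
        ∑' n : ℕ, Real.log n * logKernel (n / y) := by
    rw [← sub_eq_iff_eq_add,
      ← (summable_vonMangoldt_mul_log_mul_logKernel hy0).tsum_sub (summable_log_mul_logKernel hy0)]
    exact tsum_congr fun n ↦ by ring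
  rw [hsplit, add_sub_assoc, add_mul]
  exact (abs_add_le _ _).trans (add_le_add (h₁ y hy0 hy) (h₂ y (by nlinarith)))

theorem log_sq_mul_prime_logKernel_le {y : ℝ} (hy : 1 ≤ y) (n : ℕ) :
    Real.log y ^ 2 * (if n.Prime then logKernel (n / y) else 0) ≤
      vonMangoldt n * Real.log n * logKernel (n / y) := by
  have hy0 : 0 < y := by linarith
  rcases le_total ((n : ℝ) / y) 1 with hn | hn
  · simp [logKernel_of_le_one hn]
  split_ifs with hp
  · have hlog : Real.log y ≤ Real.log n := Real.log_le_log hy0 ((one_le_div hy0).1 hn)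
    rw [vonMangoldt_apply_prime hp, ← sq]
    have := Real.log_nonneg hy
    have := logKernel_nonneg (n / y)
    gcongr
  · rw [mul_zero]
    exact mul_nonneg (vonMangoldt_mul_log_nonneg n) (logKernel_nonneg _)

theorem vonMangoldt_mul_log_mul_logKernel_le {y : ℝ} (hy : 0 < y) (n : ℕ) :
    vonMangoldt n * Real.log n * logKernel (n / y) ≤
      Real.log y ^ 2 * (if n.Prime then logKernel (n / y) else 0) +
        2 * (vonMangoldt n * Real.log (n / y) * logKernel (n / y)) +
        y * (if n.Prime then 0 else vonMangoldt n * Real.log n / n) := by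
  rcases Nat.eq_zero_or_pos n with rfl | hn
  · simp [Nat.not_prime_zero]
  have hn0 : (0 : ℝ) < n := by exact_mod_cast hn
  split_ifs with hp
  · have : 0 ≤ Real.log (n / y) ^ 2 * logKernel (n / y) :=
      mul_nonneg (sq_nonneg _) (logKernel_nonneg _)
    rw [Real.log_div hn0.ne' hy.ne'] at this ⊢
    rw [vonMangoldt_apply_prime hp]
    linarith
  · have hdiv := vonMangoldt_mul_log_div_mul_logKernel_nonneg n y
    calc _ ≤ vonMangoldt n * Real.log n * ((n : ℝ) / y)⁻¹ :=
          mul_le_mul_of_nonneg_left (logKernel_le_inv (div_pos hn0 hy))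
            (vonMangoldt_mul_log_nonneg n)
      _ = y * (vonMangoldt n * Real.log n / n) := by rw [inv_div]; ring
      _ ≤ _ := by linarith

theorem exists_abs_log_sq_mul_tsum_prime_logKernel_sub_le :
    ∃ C, 0 < C ∧ ∀ y : ℝ, 0 < y → 2 ≤ y ^ 2 →
      |Real.log y ^ 2 * ∑' n : ℕ, (if n.Prime then logKernel (n / y) else 0) -
        y * Real.log y| ≤ C * y := by
  obtain ⟨C₁, hC₁, h₁⟩ := exists_abs_tsum_vonMangoldt_mul_log_mul_logKernel_sub_le
  obtain ⟨C₂, hC₂, h₂⟩ := exists_sum_range_vonMangoldt_mul_log_div_mul_logKernel_le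
  set R := ∑' n : ℕ, if n.Prime then 0 else vonMangoldt n * Real.log n / n
  have : 0 ≤ R := tsum_nonneg fun n ↦ by
    split_ifs
    · rfl
    · exact div_nonneg (vonMangoldt_mul_log_nonneg n) n.cast_nonneg
  refine ⟨C₁ + 2 * C₂ + R, by positivity, fun y hy0 hy ↦ ?_⟩
  have hy1 : 1 ≤ y := by nlinarith
  have hΛ := summable_vonMangoldt_mul_log_mul_logKernel hy0
  have hprime := (summable_prime_logKernel hy0).mul_left (Real.log y ^ 2)
  have hdiv := summable_of_sum_range_le
    (vonMangoldt_mul_log_div_mul_logKernel_nonneg · y) (h₂ y hy1)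
  have hdiv_le := Real.tsum_le_of_sum_range_le
    (vonMangoldt_mul_log_div_mul_logKernel_nonneg · y) (h₂ y hy1)
  have hR := summable_nonprime_vonMangoldt_mul_log_div.mul_left y
  have hlower := hprime.tsum_le_tsum (log_sq_mul_prime_logKernel_le hy1) hΛ
  have hupper := hΛ.tsum_le_tsum (vonMangoldt_mul_log_mul_logKernel_le hy0)
    ((hprime.add (hdiv.mul_left 2)).add hR)
  rw [tsum_mul_left] at hlower
  rw [(hprime.add (hdiv.mul_left 2)).tsum_add hR, hprime.tsum_add (hdiv.mul_left 2),
    tsum_mul_left, tsum_mul_left, tsum_mul_left] at hupper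
  have h₁ := abs_le.1 (h₁ y hy0 hy)
  have : 0 ≤ R * y := by positivity
  have : 0 ≤ C₂ * y := by positivity
  rw [abs_le]
  constructor <;> linarith

end PrimeSum

section PrimePowers

open ArithmeticFunction (vonMangoldt vonMangoldt_eq_zero_iff vonMangoldt_apply_pow
  vonMangoldt_apply_prime)

theorem sum_vonMangoldt_mul_eq_sum_prime (f : ℕ → ℝ) (M : ℕ) :
    ∑ n ∈ Finset.Icc 1 M, vonMangoldt n * f n =
      ∑ p ∈ (Finset.range (M + 1)).filter Nat.Prime, ∑ a ∈ Finset.Icc 1 M,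
        if p ^ a ≤ M then Real.log p * f (p ^ a) else 0 := by
  rw [← Finset.sum_product', ← Finset.sum_filter]
  symm
  refine Finset.sum_of_injOn (fun q ↦ q.1 ^ q.2) ?injOn ?mapsTo ?outside ?apply
  case injOn =>
    rintro ⟨p, a⟩ hpa ⟨q, b⟩ hqb (h : p ^ a = q ^ b)
    simp only [Finset.coe_filter, Finset.mem_product, Finset.mem_filter, Finset.mem_Icc,
      Set.mem_ofPred_eq] at hpa hqb
    obtain rfl := eq_of_prime_pow_eq hpa.1.1.2.prime hqb.1.1.2.prime hpa.1.2.1 h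
    rw [Nat.pow_right_injective hpa.1.1.2.two_le h]
  case mapsTo =>
    rintro ⟨p, a⟩ hpa
    simp only [Finset.coe_filter, Finset.mem_product, Finset.mem_filter, Finset.mem_Icc,
      Set.mem_ofPred_eq] at hpa
    exact Finset.mem_coe.2 (Finset.mem_Icc.2 ⟨Nat.one_le_pow _ _ hpa.1.1.2.pos, hpa.2⟩)
  case outside =>
    intro n hn hn'
    rw [vonMangoldt_eq_zero_iff.2, zero_mul]
    rintro ⟨p, a, hp, ha, rfl⟩
    have hp := hp.nat_prime
    have hM := (Finset.mem_Icc.1 hn).2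
    have hp_le := Nat.le_self_pow ha.ne' p
    have ha_lt := Nat.lt_pow_self hp.one_lt (n := a)
    refine hn' ⟨(p, a), ?_, rfl⟩
    simp only [Finset.coe_filter, Finset.mem_product, Finset.mem_filter, Finset.mem_Icc,
      Set.mem_ofPred_eq, Finset.mem_range]
    exact ⟨⟨⟨by lia, hp⟩, ha, by lia⟩, hM⟩
  case apply =>
    rintro ⟨p, a⟩ hpa
    simp only [Finset.mem_product, Finset.mem_filter, Finset.mem_Icc] at hpa
    rw [vonMangoldt_apply_pow (by lia), vonMangoldt_apply_prime hpa.1.1.2]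

theorem summable_ite_div_pow {p : ℝ} (hp : 1 < p) (c : ℝ) (P : ℕ → Prop) [DecidablePred P] :
    Summable fun a : ℕ ↦ if P a then c / p ^ a else 0 := by
  have hgeom : Summable fun a : ℕ ↦ c / p ^ a := by
    simpa [div_eq_mul_inv] using (summable_geometric_of_lt_one (inv_nonneg.2 (by linarith))
      (inv_lt_one_of_one_lt₀ hp)).mul_left c
  exact (hgeom.indicator {a | P a}).congr fun a ↦ by simp [Set.indicator_apply]

theorem div_sub_one_eq_tsum {p : ℝ} (hp : 1 < p) (c : ℝ) :
    c / (p - 1) = ∑' a : ℕ, if 1 ≤ a then c / p ^ a else 0 := by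
  have : 0 < p := by linarith
  have hshift (a : ℕ) : (if 1 ≤ a + 1 then c / p ^ (a + 1) else 0) = c / p * p⁻¹ ^ a := by
    rw [if_pos (by lia), pow_succ, inv_pow]
    field_simp
  rw [(summable_ite_div_pow hp c fun a ↦ 1 ≤ a).tsum_eq_zero_add, if_neg (by lia), zero_add]
  simp_rw [hshift]
  rw [tsum_mul_left, tsum_geometric_of_lt_one (by positivity) (inv_lt_one_of_one_lt₀ hp)]
  have : p - 1 ≠ 0 := by linarith
  field_simp

theorem natCast_le_of_mem_filter_prime {x : ℝ} (hx : 0 ≤ x) {p : ℕ}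
    (hp : p ∈ (Finset.range (⌊x⌋₊ + 1)).filter Nat.Prime) : (p : ℝ) ≤ x :=
  (Nat.le_floor_iff hx).1 (Nat.lt_succ_iff.1 (Finset.mem_range.1 (Finset.mem_filter.1 hp).1))

theorem one_lt_natCast_of_mem_filter_prime {N p : ℕ}
    (hp : p ∈ (Finset.range N).filter Nat.Prime) : (1 : ℝ) < p := by
  exact_mod_cast (Finset.mem_filter.1 hp).2.one_lt

theorem Delta_eq_sum_tsum {x : ℝ} (hx : 0 ≤ x) :
    Delta x = ∑ p ∈ (Finset.range (⌊x⌋₊ + 1)).filter Nat.Prime,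
      ∑' a : ℕ, if 1 ≤ a ∧ x < (p : ℝ) ^ a then Real.log p / (p : ℝ) ^ a else 0 := by
  simp only [Delta, div_eq_mul_inv (vonMangoldt _),
    sum_vonMangoldt_mul_eq_sum_prime fun n : ℕ ↦ (n : ℝ)⁻¹, ← Finset.sum_sub_distrib]
  refine Finset.sum_congr rfl fun p hp ↦ ?_
  have hp1 := one_lt_natCast_of_mem_filter_prime hp
  have hle (a : ℕ) : p ^ a ≤ ⌊x⌋₊ ↔ (p : ℝ) ^ a ≤ x := by
    rw [Nat.le_floor_iff hx, Nat.cast_pow]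
  have hsmall :
      ∑ a ∈ Finset.Icc 1 ⌊x⌋₊, (if p ^ a ≤ ⌊x⌋₊ then Real.log p * ((p ^ a : ℕ) : ℝ)⁻¹ else 0) =
        ∑' a : ℕ, if 1 ≤ a ∧ (p : ℝ) ^ a ≤ x then Real.log p / (p : ℝ) ^ a else 0 := by
    rw [tsum_eq_sum (s := Finset.Icc 1 ⌊x⌋₊)]
    · refine Finset.sum_congr rfl fun a ha ↦ ?_
      simp only [hle, (Finset.mem_Icc.1 ha).1, true_and, div_eq_mul_inv, Nat.cast_pow]
    · intro a ha
      refine if_neg fun h ↦ ha (Finset.mem_Icc.2 ⟨h.1, ?_⟩)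
      exact (Nat.lt_pow_self (by exact_mod_cast hp1)).le.trans ((hle a).2 h.2)
  rw [hsmall, div_sub_one_eq_tsum hp1, ← (summable_ite_div_pow hp1 _ _).tsum_sub
    (summable_ite_div_pow hp1 _ _)]
  refine tsum_congr fun a ↦ ?_
  by_cases h1 : 1 ≤ a <;> by_cases h2 : (p : ℝ) ^ a ≤ x <;> simp [h1, h2, not_lt.2, not_le.1]

/-- The contribution of the prime power `p ^ a` to `Δ(x) / log x - Δ̃(x)`, for a real base `p`:
only the powers exceeding `x` contribute. -/
noncomputable def primePowerTerm (x p : ℝ) (a : ℕ) : ℝ :=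
  if 1 ≤ a ∧ x < p ^ a then (Real.log p / Real.log x - 1 / a) / p ^ a else 0

theorem summable_one_div_mul_pow {p : ℝ} (hp : 1 < p) (x : ℝ) :
    Summable fun a : ℕ ↦ if 1 ≤ a ∧ x < p ^ a then 1 / (a * p ^ a) else 0 := by
  have : 0 < p := by linarith
  refine (summable_ite_div_pow hp 1 fun a ↦ 1 ≤ a ∧ x < p ^ a).of_nonneg_of_le
    (fun a ↦ by positivity) fun a ↦ ?_
  split_ifs with h
  · have : (1 : ℝ) ≤ a := by exact_mod_cast h.1
    gcongr
    exact le_mul_of_one_le_left (by positivity) this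
  · exact le_rfl

theorem hasSum_primePowerTerm {p : ℝ} (hp : 1 < p) (x : ℝ) :
    HasSum (primePowerTerm x p)
      ((∑' a : ℕ, if 1 ≤ a ∧ x < p ^ a then Real.log p / p ^ a else 0) / Real.log x -
        ∑' a : ℕ, if 1 ≤ a ∧ x < p ^ a then 1 / (a * p ^ a) else 0) := by
  have hterm : primePowerTerm x p = fun a : ℕ ↦
      (if 1 ≤ a ∧ x < p ^ a then Real.log p / p ^ a else 0) / Real.log x -
        if 1 ≤ a ∧ x < p ^ a then 1 / (a * p ^ a) else 0 := by
    ext a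
    rw [primePowerTerm]
    split_ifs with h
    · have : (a : ℝ) ≠ 0 := by exact_mod_cast (by lia : a ≠ 0)
      field_simp
    · rw [zero_div, sub_zero]
  rw [hterm]
  exact ((summable_ite_div_pow hp _ _).hasSum.div_const _).sub
    (summable_one_div_mul_pow hp x).hasSum

theorem Delta_div_log_sub_hDelta_eq {x : ℝ} (hx : 0 ≤ x) :
    Delta x / Real.log x - hDelta x =
      ∑ p ∈ (Finset.range (⌊x⌋₊ + 1)).filter Nat.Prime, ∑' a, primePowerTerm x p a := by
  rw [Delta_eq_sum_tsum hx, hDelta, Finset.sum_div, ← Finset.sum_sub_distrib]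
  exact Finset.sum_congr rfl fun p hp ↦
    (hasSum_primePowerTerm (one_lt_natCast_of_mem_filter_prime hp) x).tsum_eq.symm

theorem primePowerTerm_nonneg {x : ℝ} (hx : 1 < x) (p : ℝ) (a : ℕ) : 0 ≤ primePowerTerm x p a := by
  rw [primePowerTerm]
  split_ifs with h
  · have hpow : 0 < p ^ a := by linarith
    have ha : (0 : ℝ) < a := by exact_mod_cast h.1
    have hlog := Real.log_le_log (by linarith) h.2.le
    rw [Real.log_pow] at hlog
    refine div_nonneg (sub_nonneg.2 ?_) hpow.le
    rw [div_le_div_iff₀ ha (Real.log_pos hx)]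
    linarith
  · exact le_rfl

theorem primePowerTerm_add_three_le {x p : ℝ} (hp : 2 ≤ p) (hpx : p ≤ x) (a : ℕ) :
    primePowerTerm x p (a + 3) ≤
      x ^ (-3 / 5 : ℝ) * p ^ (-6 / 5 : ℝ) * ((2 : ℝ) ^ (-2 / 5 : ℝ)) ^ a := by
  have hp0 : 0 < p := by linarith
  have hx0 : 0 < x := by linarith
  rw [primePowerTerm]
  split_ifs with h
  swap
  · positivity
  have hpow : 0 < p ^ (a + 3) := by positivity
  have hcoeff : Real.log p / Real.log x - 1 / (a + 3 : ℕ) ≤ 1 := by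
    have : Real.log p / Real.log x ≤ 1 :=
      div_le_one_of_le₀ (Real.log_le_log hp0 hpx) (Real.log_nonneg (by linarith))
    have : (0 : ℝ) ≤ 1 / (a + 3 : ℕ) := by positivity
    linarith
  calc _ ≤ 1 / p ^ (a + 3) := div_le_div_of_nonneg_right hcoeff hpow.le
    _ = (p ^ (a + 3)) ^ (-3 / 5 : ℝ) * (p ^ (a + 3)) ^ (-2 / 5 : ℝ) := by
      rw [← Real.rpow_add hpow]; norm_num [Real.rpow_neg_one]
    _ ≤ x ^ (-3 / 5 : ℝ) * (p ^ (a + 3)) ^ (-2 / 5 : ℝ) := by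
      gcongr ?_ * _
      exact Real.rpow_le_rpow_of_nonpos hx0 h.2.le (by norm_num)
    _ = x ^ (-3 / 5 : ℝ) * (p ^ (-6 / 5 : ℝ) * (p ^ (-2 / 5 : ℝ)) ^ a) := by
      rw [← Real.rpow_natCast, ← Real.rpow_natCast, ← Real.rpow_mul hp0.le,
        ← Real.rpow_mul hp0.le, ← Real.rpow_add hp0]
      congr 2
      push_cast
      ring
    _ ≤ x ^ (-3 / 5 : ℝ) * (p ^ (-6 / 5 : ℝ) * ((2 : ℝ) ^ (-2 / 5 : ℝ)) ^ a) := by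
      gcongr _ * (_ * ?_ ^ _)
      exact Real.rpow_le_rpow_of_nonpos (by norm_num) hp (by norm_num)
    _ = _ := by ring

theorem exists_sum_tsum_primePowerTerm_add_three_le :
    ∃ C, 0 < C ∧ ∀ x : ℝ, 0 ≤ x → ∑ p ∈ (Finset.range (⌊x⌋₊ + 1)).filter Nat.Prime,
      ∑' a, primePowerTerm x p (a + 3) ≤ C * x ^ (-3 / 5 : ℝ) := by
  set r : ℝ := (2 : ℝ) ^ (-2 / 5 : ℝ)
  have hr0 : 0 < r := by positivity
  have hr1 : r < 1 := Real.rpow_lt_one_of_one_lt_of_neg (by norm_num) (by norm_num)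
  have : 0 < (1 - r)⁻¹ := inv_pos.2 (by linarith)
  have hs : Summable fun n : ℕ ↦ (n : ℝ) ^ (-6 / 5 : ℝ) :=
    Real.summable_nat_rpow.2 (by norm_num)
  have hZ : 0 < ∑' n : ℕ, (n : ℝ) ^ (-6 / 5 : ℝ) := hs.tsum_pos (fun n ↦ by positivity) 1 (by simp)
  refine ⟨(1 - r)⁻¹ * ∑' n : ℕ, (n : ℝ) ^ (-6 / 5 : ℝ), by positivity, fun x hx ↦ ?_⟩
  have hinner : ∀ p ∈ (Finset.range (⌊x⌋₊ + 1)).filter Nat.Prime,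
      ∑' a, primePowerTerm x p (a + 3) ≤
        x ^ (-3 / 5 : ℝ) * (1 - r)⁻¹ * (p : ℝ) ^ (-6 / 5 : ℝ) := by
    intro p hp
    have hp2 : (2 : ℝ) ≤ p := by exact_mod_cast (Finset.mem_filter.1 hp).2.two_le
    rw [mul_right_comm, ← tsum_geometric_of_lt_one hr0.le hr1, ← tsum_mul_left]
    exact ((summable_nat_add_iff 3).2
      (hasSum_primePowerTerm (by linarith) x).summable).tsum_le_tsum
        (primePowerTerm_add_three_le hp2 (natCast_le_of_mem_filter_prime hx hp))
        ((summable_geometric_of_lt_one hr0.le hr1).mul_left _)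
  calc _ ≤ x ^ (-3 / 5 : ℝ) * (1 - r)⁻¹ *
        ∑ p ∈ (Finset.range (⌊x⌋₊ + 1)).filter Nat.Prime, (p : ℝ) ^ (-6 / 5 : ℝ) := by
        rw [Finset.mul_sum]
        exact Finset.sum_le_sum hinner
    _ ≤ x ^ (-3 / 5 : ℝ) * (1 - r)⁻¹ * ∑' n : ℕ, (n : ℝ) ^ (-6 / 5 : ℝ) := by
      gcongr
      exact hs.sum_le_tsum _ fun n _ ↦ by positivity
    _ = _ := by ring

theorem primePowerTerm_two_eq {x p : ℝ} (hx : 1 < x) (hp : 0 < p) :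
    primePowerTerm x p 2 = logKernel (p / √x) / (Real.log x * x) := by
  have hx0 : 0 < x := by linarith
  have hy : 0 < √x := Real.sqrt_pos.2 hx0
  have hlog := Real.log_pos hx
  rw [primePowerTerm]
  split_ifs with h
  · have hx1 : √x ≤ p := Real.sqrt_le_iff.2 ⟨hp.le, h.2.le⟩
    rw [logKernel_of_one_le ((one_le_div hy).2 hx1), Real.log_div hp.ne' hy.ne',
      Real.log_sqrt hx0.le, div_pow, Real.sq_sqrt hx0.le]
    push_cast
    field_simp
  · have hp_le : p ≤ √x := (Real.le_sqrt' hp).2 (not_lt.1 fun h' ↦ h ⟨by norm_num, h'⟩)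
    rw [logKernel_of_le_one ((div_le_one hy).2 hp_le), zero_div]

theorem Delta_div_log_sub_hDelta_eq_add {x : ℝ} (hx : 1 < x) :
    Delta x / Real.log x - hDelta x =
      (∑ p ∈ (Finset.range (⌊x⌋₊ + 1)).filter Nat.Prime, logKernel (p / √x)) / (Real.log x * x) +
        ∑ p ∈ (Finset.range (⌊x⌋₊ + 1)).filter Nat.Prime, ∑' a, primePowerTerm x p (a + 3) := by
  have hx0 : 0 < x := by linarith
  rw [Delta_div_log_sub_hDelta_eq hx0.le, Finset.sum_div, ← Finset.sum_add_distrib]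
  refine Finset.sum_congr rfl fun p hp ↦ ?_
  have hp1 := one_lt_natCast_of_mem_filter_prime hp
  have hpx := natCast_le_of_mem_filter_prime hx0.le hp
  rw [← primePowerTerm_two_eq hx (by linarith),
    ← (hasSum_primePowerTerm hp1 x).summable.sum_add_tsum_nat_add 3]
  simp [Finset.sum_range_succ, primePowerTerm, hpx.not_gt]

theorem exists_logKernel_div_sqrt_le :
    ∃ C, 0 < C ∧ ∀ x m : ℝ, 0 < x → x ≤ m →
      logKernel (m / √x) ≤ C * (x ^ (1 / 4 : ℝ) * m ^ (-9 / 8 : ℝ)) := by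
  obtain ⟨A, hA, hkernel⟩ := exists_log_pow_mul_logKernel_le 0 (δ := 1 / 4) (by norm_num)
  refine ⟨A, hA, fun x m hx hm ↦ ?_⟩
  have hm0 : 0 < m := by linarith
  have hy : 0 < √x := Real.sqrt_pos.2 hx
  calc logKernel (m / √x) ≤ A * (m / √x) ^ (1 / 4 - 2 : ℝ) := by
        simpa using hkernel (m / √x) (by positivity)
    _ = A * (x ^ (7 / 8 : ℝ) * m ^ (-5 / 8 : ℝ) * m ^ (-9 / 8 : ℝ)) := by
      rw [mul_assoc (x ^ _), ← Real.rpow_add hm0, Real.div_rpow hm0.le hy.le, Real.sqrt_eq_rpow,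
        ← Real.rpow_mul hx.le, div_eq_mul_inv, ← Real.rpow_neg hx.le, mul_comm (x ^ _)]
      norm_num
    _ ≤ A * (x ^ (7 / 8 : ℝ) * x ^ (-5 / 8 : ℝ) * m ^ (-9 / 8 : ℝ)) := by
      gcongr A * (_ * ?_ * _)
      exact Real.rpow_le_rpow_of_nonpos hx hm (by norm_num)
    _ = _ := by
      rw [← Real.rpow_add hx]
      norm_num

theorem exists_tsum_sub_sum_prime_logKernel_le :
    ∃ C, 0 < C ∧ ∀ x : ℝ, 0 < x →
      (∑' n : ℕ, if n.Prime then logKernel (n / √x) else 0) -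
        ∑ p ∈ (Finset.range (⌊x⌋₊ + 1)).filter Nat.Prime, logKernel (p / √x) ≤
          C * x ^ (1 / 4 : ℝ) := by
  obtain ⟨A, hA, hkernel⟩ := exists_logKernel_div_sqrt_le
  have hs : Summable fun n : ℕ ↦ (n : ℝ) ^ (-9 / 8 : ℝ) :=
    Real.summable_nat_rpow.2 (by norm_num)
  have hZ : 0 < ∑' n : ℕ, (n : ℝ) ^ (-9 / 8 : ℝ) := hs.tsum_pos (fun n ↦ by positivity) 1 (by simp)
  refine ⟨A * ∑' n : ℕ, (n : ℝ) ^ (-9 / 8 : ℝ), by positivity, fun x hx ↦ ?_⟩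
  have hprime := summable_prime_logKernel (Real.sqrt_pos.2 hx)
  have hterm (n : ℕ) : (if (n + (⌊x⌋₊ + 1)).Prime then
      logKernel ((n + (⌊x⌋₊ + 1) : ℕ) / √x) else 0) ≤
        A * x ^ (1 / 4 : ℝ) * ((n + (⌊x⌋₊ + 1) : ℕ) : ℝ) ^ (-9 / 8 : ℝ) := by
    split_ifs
    · have hx_lt := Nat.lt_floor_add_one x
      rw [mul_assoc]
      refine hkernel _ _ hx ?_
      push_cast
      linarith [(n.cast_nonneg : (0 : ℝ) ≤ n)]
    · positivity
  rw [Finset.sum_filter, ← hprime.sum_add_tsum_nat_add (⌊x⌋₊ + 1), add_sub_cancel_left]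
  have hs' := (summable_nat_add_iff (⌊x⌋₊ + 1)).2 hs
  calc _ ≤ A * x ^ (1 / 4 : ℝ) * ∑' n : ℕ, ((n + (⌊x⌋₊ + 1) : ℕ) : ℝ) ^ (-9 / 8 : ℝ) := by
        rw [← tsum_mul_left]
        exact ((summable_nat_add_iff (⌊x⌋₊ + 1)).2 hprime).tsum_le_tsum hterm (hs'.mul_left _)
    _ ≤ A * x ^ (1 / 4 : ℝ) * ∑' n : ℕ, (n : ℝ) ^ (-9 / 8 : ℝ) := by
        rw [← hs.sum_add_tsum_nat_add (⌊x⌋₊ + 1)]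
        gcongr
        exact le_add_of_nonneg_left (Finset.sum_nonneg fun n _ ↦ by positivity)
    _ = _ := by ring

end PrimePowers

theorem exists_rpow_le_div_sqrt_mul_log_pow (k : ℕ) {δ : ℝ} (hδ : δ < -(1 / 2)) :
    ∃ C, 0 < C ∧ ∀ x : ℝ, 1 < x → x ^ δ ≤ C / (√x * Real.log x ^ k) := by
  obtain ⟨C, hC, hlog⟩ := exists_log_pow_le_rpow k (δ := -(1 / 2) - δ) (by linarith)
  refine ⟨C, hC, fun x hx ↦ ?_⟩
  have hx0 : 0 < x := by linarith
  have hL := Real.log_pos hx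
  rw [le_div_iff₀ (by positivity), Real.sqrt_eq_rpow]
  calc x ^ δ * (x ^ (1 / 2 : ℝ) * Real.log x ^ k) ≤
        x ^ δ * (x ^ (1 / 2 : ℝ) * (C * x ^ (-(1 / 2) - δ))) := by
        gcongr
        exact hlog x hx.le
    _ = C * (x ^ δ * x ^ (1 / 2 : ℝ) * x ^ (-(1 / 2) - δ)) := by ring
    _ = C := by
      rw [← Real.rpow_add hx0, ← Real.rpow_add hx0, add_sub, add_neg_cancel_right, sub_self,
        Real.rpow_zero, mul_one]

theorem exists_sum_tsum_primePowerTerm_add_three_le_div :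
    ∃ C, 0 < C ∧ ∀ x : ℝ, 1 < x → ∑ p ∈ (Finset.range (⌊x⌋₊ + 1)).filter Nat.Prime,
      ∑' a, primePowerTerm x p (a + 3) ≤ C / (√x * Real.log x ^ 3) := by
  obtain ⟨A, hA, hsum⟩ := exists_sum_tsum_primePowerTerm_add_three_le
  obtain ⟨B, hB, hpow⟩ := exists_rpow_le_div_sqrt_mul_log_pow 3 (δ := -3 / 5) (by norm_num)
  refine ⟨A * B, by positivity, fun x hx ↦ (hsum x (by linarith)).trans ?_⟩
  rw [mul_div_assoc]
  gcongr
  exact hpow x hx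

theorem exists_abs_tsum_prime_logKernel_div_sub_le :
    ∃ C, 0 < C ∧ ∀ x : ℝ, 2 ≤ x →
      |(∑' n : ℕ, if n.Prime then logKernel (n / √x) else 0) / (Real.log x * x) -
        2 / (√x * Real.log x ^ 2)| ≤ C / (√x * Real.log x ^ 3) := by
  obtain ⟨D, hD, hasymp⟩ := exists_abs_log_sq_mul_tsum_prime_logKernel_sub_le
  refine ⟨4 * D, by positivity, fun x hx ↦ ?_⟩
  have hx0 : 0 < x := by linarith
  have hy : 0 < √x := Real.sqrt_pos.2 hx0
  have hL : 0 < Real.log x := Real.log_pos (by linarith)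
  have hasymp := hasymp √x hy (by rwa [Real.sq_sqrt hx0.le])
  rw [Real.log_sqrt hx0.le] at hasymp
  set S := ∑' n : ℕ, if n.Prime then logKernel (n / √x) else 0
  calc |S / (Real.log x * x) - 2 / (√x * Real.log x ^ 2)| =
        |4 / (Real.log x ^ 3 * x) * ((Real.log x / 2) ^ 2 * S - √x * (Real.log x / 2))| := by
        congr 1
        field_simp
        linear_combination 8 * Real.sq_sqrt hx0.le
    _ ≤ 4 / (Real.log x ^ 3 * x) * (D * √x) := by
        rw [abs_mul, abs_of_pos (by positivity)]
        gcongr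
    _ = _ := by
        field_simp
        rw [Real.sq_sqrt hx0.le]

theorem exists_tsum_sub_sum_prime_logKernel_div_le :
    ∃ C, 0 < C ∧ ∀ x : ℝ, 1 < x →
      ((∑' n : ℕ, if n.Prime then logKernel (n / √x) else 0) -
        ∑ p ∈ (Finset.range (⌊x⌋₊ + 1)).filter Nat.Prime, logKernel (p / √x)) /
          (Real.log x * x) ≤ C / (√x * Real.log x ^ 3) := by
  obtain ⟨A, hA, htail⟩ := exists_tsum_sub_sum_prime_logKernel_le
  obtain ⟨B, hB, hpow⟩ := exists_rpow_le_div_sqrt_mul_log_pow 2 (δ := -3 / 4) (by norm_num)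
  refine ⟨A * B, by positivity, fun x hx ↦ ?_⟩
  have hx0 : 0 < x := by linarith
  have hL := Real.log_pos hx
  calc _ ≤ A * x ^ (1 / 4 : ℝ) / (Real.log x * x) := by
        gcongr
        exact htail x hx0
    _ = A * (x ^ (-3 / 4 : ℝ) / Real.log x) := by
        rw [show (-3 / 4 : ℝ) = 1 / 4 - 1 by norm_num, Real.rpow_sub_one hx0.ne']
        field_simp
    _ ≤ A * (B / (√x * Real.log x ^ 2) / Real.log x) := by
        gcongr
        exact hpow x hx
    _ = _ := by
        field_simp

theorem exists_abs_sum_prime_logKernel_div_sub_le :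
    ∃ C, 0 < C ∧ ∀ x : ℝ, 2 ≤ x →
      |(∑ p ∈ (Finset.range (⌊x⌋₊ + 1)).filter Nat.Prime, logKernel (p / √x)) /
        (Real.log x * x) - 2 / (√x * Real.log x ^ 2)| ≤ C / (√x * Real.log x ^ 3) := by
  obtain ⟨A, hA, hseries⟩ := exists_abs_tsum_prime_logKernel_div_sub_le
  obtain ⟨B, hB, htail⟩ := exists_tsum_sub_sum_prime_logKernel_div_le
  refine ⟨A + B, by positivity, fun x hx ↦ ?_⟩
  have hx0 : 0 < x := by linarith
  have hL : 0 < Real.log x := Real.log_pos (by linarith)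
  have hseries := hseries x hx
  have htail := htail x (by linarith)
  have hle : ∑ p ∈ (Finset.range (⌊x⌋₊ + 1)).filter Nat.Prime, logKernel (p / √x) ≤
      ∑' n : ℕ, if n.Prime then logKernel (n / √x) else 0 := by
    rw [Finset.sum_filter]
    exact (summable_prime_logKernel (Real.sqrt_pos.2 hx0)).sum_le_tsum _ fun n _ ↦ by
      split_ifs
      · exact logKernel_nonneg _
      · exact le_rfl
  have htail0 := div_nonneg (sub_nonneg.2 hle) (mul_pos hL hx0).le
  rw [sub_div] at htail htail0
  rw [abs_le] at hseries ⊢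
  rw [add_div]
  constructor <;> linarith [hseries.1, hseries.2]

/-- `Δ(x)/log x - Δ̃(x) = 2/(√x (log x)^2) + O(1/(√x (log x)^3))` for `x ≥ 2`. -/
theorem Delta_div_log_sub_hDelta_asymp :
    ∃ C : ℝ, ∀ x : ℝ, 2 ≤ x →
      |Delta x / Real.log x - hDelta x - 2 / (Real.sqrt x * (Real.log x) ^ 2)| ≤
        C / (Real.sqrt x * (Real.log x) ^ 3) := by
  obtain ⟨A, -, hsquares⟩ := exists_abs_sum_prime_logKernel_div_sub_le
  obtain ⟨B, -, hcubes⟩ := exists_sum_tsum_primePowerTerm_add_three_le_div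
  refine ⟨A + B, fun x hx ↦ ?_⟩
  have hx1 : 1 < x := by linarith
  have hnonneg : 0 ≤ ∑ p ∈ (Finset.range (⌊x⌋₊ + 1)).filter Nat.Prime,
      ∑' a, primePowerTerm x p (a + 3) :=
    Finset.sum_nonneg fun p _ ↦ tsum_nonneg fun a ↦ primePowerTerm_nonneg hx1 p _
  rw [Delta_div_log_sub_hDelta_eq_add hx1, add_sub_right_comm, add_div]
  refine (abs_add_le _ _).trans (add_le_add (hsquares x hx) ?_)
  rw [abs_of_nonneg hnonneg]
  exact hcubes x hx1
end

section
/- There exists a function G, analytic on the half-plane {s ∈ ℂ : Re s > −1}, such that for every real s > 0, ∫_1^∞ x^{−s−1}·H(x)·log x dx = −(1/s²)·log( s·ζ(s+1)/(s+1) ) − (1 − γ)/s + G(s), where ζ is the Riemann zeta function and log is the real logarithm (note s·ζ(s+1)/(s+1) > 0 for real s > 0). -/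
open Filter

/-- `R(x) = ∑_{n ≤ x} Λ(n)/n - log x + γ`. -/
noncomputable def Rfun (x : ℝ) : ℝ :=
  (∑ n ∈ Finset.Icc 1 ⌊x⌋₊, ArithmeticFunction.vonMangoldt n / n) -
    Real.log x + Real.eulerMascheroniConstant

/-- `H(x) = ∫_x^∞ R(t)/(t (log t)^2) dt`. -/
noncomputable def Hfun (x : ℝ) : ℝ :=
  ∫ t in Set.Ioi x, Rfun t / (t * (Real.log t) ^ 2)

/-! The kernels `x ^ (-s - 1) * log x` and `σ * t ^ (-σ)` have, up to the factors `s ^ 2` and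
`log t ^ 2`, the same antiderivative `-Γ(2, s log x)`, in `x` and in `s` respectively. Exchanging
the order of integration twice therefore gives
`s² ∫_1^∞ x^{-s-1} H(x) log x dx = ∫_0^s σ ∫_1^∞ R(t) t^{-σ-1} dt dσ`, where absolute convergence
comes from Mertens' theorem `R = O(1)`. By partial summation of `-ζ'/ζ`, the inner integral times
`σ` is `γ - (log ζ₁)'(1 + σ)` with `ζ₁(s) = (s - 1) ζ(s)` entire and `ζ₁(1) = 1`, so the
right-hand side is `γ s - log ζ₁(1 + s)`. Dividing `ζ₁(1 + s)` by `1 + s` contributes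
`log (1 + s)`; since `log (1 + s) - s` vanishes to second order at `0`, its quotient by `s²` is
analytic on `Re s > -1`. -/

open Asymptotics MeasureTheory Set Topology

open ArithmeticFunction (vonMangoldt vonMangoldt_nonneg)

section DividedDifferences

variable {𝕜 E : Type*} [NontriviallyNormedField 𝕜] [NormedAddCommGroup E] [NormedSpace 𝕜 E]

theorem dslope_dslope_of_ne (f : 𝕜 → E) {a b : 𝕜} (h : b ≠ a) :
    dslope (dslope f a) a b = ((b - a) ^ 2)⁻¹ • (f b - f a - (b - a) • deriv f a) := by
  have hba : b - a ≠ 0 := sub_ne_zero.2 h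
  rw [dslope_of_ne _ h, slope_def_module, dslope_same, dslope_of_ne _ h, slope_def_module,
    smul_sub, smul_smul, smul_sub _ (f b - f a), smul_smul, ← sq, inv_pow]
  congr 2
  field_simp

theorem differentiableOn_log_one_add :
    DifferentiableOn ℂ (fun z ↦ Complex.log (1 + z)) {z | -1 < z.re} := fun z hz ↦
  (((differentiableAt_const 1).add differentiableAt_id).clog
    (.inl (by simpa [neg_lt_iff_pos_add'] using hz))).differentiableWithinAt

theorem deriv_log_one_add_zero : deriv (fun z ↦ Complex.log (1 + z)) 0 = 1 := by
  have h := ((hasDerivAt_id (0 : ℂ)).const_add 1).clog (by simp)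
  simpa using h.deriv

theorem analyticOn_dslope_dslope_log_one_add :
    AnalyticOn ℂ (dslope (dslope (fun z ↦ Complex.log (1 + z)) 0) 0) {z | -1 < z.re} := by
  have hopen : IsOpen {z : ℂ | -1 < z.re} := isOpen_lt continuous_const Complex.continuous_re
  have hmem : {z : ℂ | -1 < z.re} ∈ 𝓝 0 := hopen.mem_nhds (by simp)
  refine DifferentiableOn.analyticOn ?_ hopen
  rw [Complex.differentiableOn_dslope hmem, Complex.differentiableOn_dslope hmem]
  exact differentiableOn_log_one_add

end DividedDifferences

section Mertens

theorem sum_vonMangoldt_mul_div (N : ℕ) :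
    ∑ n ∈ Finset.Icc 1 N, vonMangoldt n * ((N / n : ℕ) : ℝ) = Real.log N.factorial := by
  calc ∑ n ∈ Finset.Icc 1 N, vonMangoldt n * ((N / n : ℕ) : ℝ)
      = ∑ n ∈ Finset.Icc 1 N, Real.log n := by
        have h := ArithmeticFunction.sum_Ioc_mul_zeta_eq_sum vonMangoldt N
        rw [ArithmeticFunction.vonMangoldt_mul_zeta] at h
        simpa only [← Finset.Icc_add_one_left_eq_Ioc, zero_add, ArithmeticFunction.log_apply]
          using h.symm
    _ = Real.log N.factorial := by
        rw [← Finset.prod_Ico_id_eq_factorial, Finset.Ico_add_one_right_eq_Icc, Nat.cast_prod,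
          Real.log_prod]
        intro n hn
        exact_mod_cast (zero_lt_one.trans_le (Finset.mem_Icc.1 hn).1).ne'

theorem log_factorial_le_mul_sum_vonMangoldt_div (N : ℕ) :
    Real.log N.factorial ≤ N * ∑ n ∈ Finset.Icc 1 N, vonMangoldt n / n := by
  rw [← sum_vonMangoldt_mul_div, Finset.mul_sum]
  refine Finset.sum_le_sum fun n _ ↦ ?_
  calc vonMangoldt n * ((N / n : ℕ) : ℝ) ≤ vonMangoldt n * (N / n) :=
        mul_le_mul_of_nonneg_left Nat.cast_div_le vonMangoldt_nonneg
    _ = N * (vonMangoldt n / n) := mul_div_left_comm ..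

theorem mul_sum_vonMangoldt_div_le_log_factorial_add_psi (N : ℕ) :
    N * ∑ n ∈ Finset.Icc 1 N, vonMangoldt n / n ≤
      Real.log N.factorial + Chebyshev.psi N := by
  rw [← sum_vonMangoldt_mul_div, Chebyshev.psi, Nat.floor_natCast,
    ← Finset.Icc_add_one_left_eq_Ioc, zero_add, ← Finset.sum_add_distrib, Finset.mul_sum]
  refine Finset.sum_le_sum fun n _ ↦ ?_
  have hfloor : (N / n : ℝ) ≤ (N / n : ℕ) + 1 := by
    simpa only [Nat.floor_div_eq_div] using (Nat.lt_floor_add_one (N / n : ℝ)).le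
  calc N * (vonMangoldt n / n) = vonMangoldt n * (N / n) := mul_div_left_comm ..
    _ ≤ vonMangoldt n * ((N / n : ℕ) + 1) :=
        mul_le_mul_of_nonneg_left hfloor vonMangoldt_nonneg
    _ = vonMangoldt n * (N / n : ℕ) + vonMangoldt n := mul_add_one ..

theorem sum_vonMangoldt_div_le {N : ℕ} (hN : N ≠ 0) :
    ∑ n ∈ Finset.Icc 1 N, vonMangoldt n / n ≤ Real.log N + (Real.log 4 + 4) := by
  have hN' : (0 : ℝ) < N := by positivity
  have hfactorial : Real.log N.factorial ≤ N * Real.log N := by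
    rw [← Real.log_pow]
    exact Real.log_le_log (by positivity) (by exact_mod_cast N.factorial_le_pow)
  refine le_of_mul_le_mul_left ?_ hN'
  linarith [mul_sum_vonMangoldt_div_le_log_factorial_add_psi N,
    Chebyshev.psi_le_const_mul_self hN'.le]

theorem log_sub_one_le_sum_vonMangoldt_div {N : ℕ} (hN : N ≠ 0) :
    Real.log N - 1 ≤ ∑ n ∈ Finset.Icc 1 N, vonMangoldt n / n := by
  have hlog : 0 ≤ Real.log (2 * Real.pi) := Real.log_nonneg (by linarith [Real.pi_gt_three])
  refine le_of_mul_le_mul_left ?_ (by positivity : (0 : ℝ) < N)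
  linarith [log_factorial_le_mul_sum_vonMangoldt_div N, Stirling.le_log_factorial_stirling hN,
    Real.log_natCast_nonneg N]

theorem log_floor_le_log {x : ℝ} (hx : 1 ≤ x) : Real.log ⌊x⌋₊ ≤ Real.log x :=
  Real.log_le_log (by exact_mod_cast Nat.floor_pos.2 hx) (Nat.floor_le (by linarith))

theorem log_le_log_two_add_log_floor {x : ℝ} (hx : 1 ≤ x) :
    Real.log x ≤ Real.log 2 + Real.log ⌊x⌋₊ := by
  have hfloor : (1 : ℝ) ≤ ⌊x⌋₊ := by exact_mod_cast Nat.floor_pos.2 hx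
  rw [← Real.log_mul two_ne_zero (by linarith)]
  exact Real.log_le_log (by linarith) (by linarith [Nat.lt_floor_add_one x])

theorem exists_abs_Rfun_le : ∃ C, ∀ x, 1 ≤ x → |Rfun x| ≤ C := by
  refine ⟨Real.log 4 + 5 + Real.log 2 + |Real.eulerMascheroniConstant|, fun x hx ↦ ?_⟩
  have hfloor : ⌊x⌋₊ ≠ 0 := (Nat.floor_pos.2 hx).ne'
  have hγ := abs_le.1 (le_refl |Real.eulerMascheroniConstant|)
  have hlog_two : 0 ≤ Real.log 2 := Real.log_nonneg one_le_two
  have hlog_four : 0 ≤ Real.log 4 := Real.log_nonneg (by norm_num)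
  rw [Rfun, abs_le]
  constructor <;>
    linarith [sum_vonMangoldt_div_le hfloor, log_sub_one_le_sum_vonMangoldt_div hfloor,
      log_floor_le_log hx, log_le_log_two_add_log_floor hx]

theorem measurable_Rfun : Measurable Rfun := by
  have hsum : Measurable fun x : ℝ ↦ ∑ n ∈ Finset.Icc 1 ⌊x⌋₊, vonMangoldt n / (n : ℝ) :=
    (measurable_from_top (f := fun N : ℕ ↦ ∑ n ∈ Finset.Icc 1 N, vonMangoldt n / (n : ℝ))).comp
      Nat.measurable_floor
  exact (hsum.sub Real.measurable_log).add_const _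

end Mertens

section LogarithmicKernel

/-- The upper incomplete Gamma function `Γ(2, u) = (1 + u) e^{-u}` at `u = s log x`, for `x > 0`.
Up to sign it is an antiderivative both in `x` and in `s`, which links the kernel
`x ^ (-s - 1) * log x` of the Mellin transform to the weight `1 / log t ^ 2` of `Hfun`. -/
noncomputable def gammaTwoLog (s x : ℝ) : ℝ := x ^ (-s) * (1 + s * Real.log x)

@[simp]
theorem gammaTwoLog_zero_left (x : ℝ) : gammaTwoLog 0 x = 1 := by simp [gammaTwoLog]

@[simp]
theorem gammaTwoLog_one_right (s : ℝ) : gammaTwoLog s 1 = 1 := by simp [gammaTwoLog]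

theorem hasDerivAt_neg_gammaTwoLog_right (s : ℝ) {x : ℝ} (hx : x ≠ 0) :
    HasDerivAt (fun x ↦ -gammaTwoLog s x) (s ^ 2 * (x ^ (-s - 1) * Real.log x)) x := by
  have hpow := Real.hasDerivAt_rpow_const (p := -s) (.inl hx)
  have hlog := ((Real.hasDerivAt_log hx).const_mul s).const_add 1
  refine (hpow.mul hlog).neg.congr_deriv ?_
  rw [Real.rpow_sub_one hx]
  field_simp
  ring

theorem hasDerivAt_neg_gammaTwoLog_left (s : ℝ) {x : ℝ} (hx : 0 < x) :
    HasDerivAt (fun s ↦ -gammaTwoLog s x) (Real.log x ^ 2 * (s * x ^ (-s))) s := by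
  have hpow := (hasDerivAt_neg s).const_rpow hx
  have hlin := ((hasDerivAt_id s).mul_const (Real.log x)).const_add 1
  refine (hpow.mul hlin).neg.congr_deriv ?_
  simp only [id]
  ring

theorem tendsto_gammaTwoLog_atTop {s : ℝ} (hs : 0 < s) :
    Tendsto (gammaTwoLog s) atTop (𝓝 0) := by
  have hpow := tendsto_rpow_neg_atTop hs
  have hlog := (isLittleO_log_rpow_atTop hs).tendsto_div_nhds_zero.const_mul s
  have hsum := hpow.add hlog
  rw [mul_zero, add_zero] at hsum
  refine hsum.congr' ?_
  filter_upwards [eventually_ge_atTop 0] with x hx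
  rw [gammaTwoLog, Real.rpow_neg hx]
  ring

theorem rpow_mul_log_nonneg {x : ℝ} (hx : 1 ≤ x) (a : ℝ) : 0 ≤ x ^ a * Real.log x :=
  mul_nonneg (Real.rpow_nonneg (zero_le_one.trans hx) a) (Real.log_nonneg hx)

theorem integrableOn_Ioi_one_rpow_mul_log {s : ℝ} (hs : 0 < s) :
    IntegrableOn (fun x ↦ x ^ (-s - 1) * Real.log x) (Ioi 1) := by
  have h := integrableOn_Ioi_deriv_of_nonneg'
    (fun x hx ↦ hasDerivAt_neg_gammaTwoLog_right s (zero_lt_one.trans_le hx).ne')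
    (fun x hx ↦ mul_nonneg (sq_nonneg s) (rpow_mul_log_nonneg (le_of_lt hx) _))
    (tendsto_gammaTwoLog_atTop hs).neg
  refine (h.const_mul (s ^ 2)⁻¹).congr (.of_forall fun x ↦ ?_)
  simp only [inv_mul_cancel_left₀ (pow_ne_zero 2 hs.ne')]

theorem integral_Ioi_one_rpow_mul_log {s : ℝ} (hs : 0 < s) :
    ∫ x in Ioi 1, x ^ (-s - 1) * Real.log x = (s ^ 2)⁻¹ := by
  have h := integral_Ioi_of_hasDerivAt_of_tendsto'
    (fun x hx ↦ hasDerivAt_neg_gammaTwoLog_right s (zero_lt_one.trans_le hx).ne')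
    ((integrableOn_Ioi_one_rpow_mul_log hs).const_mul (s ^ 2)) (tendsto_gammaTwoLog_atTop hs).neg
  rw [integral_const_mul, gammaTwoLog_one_right, neg_zero, sub_neg_eq_add, zero_add] at h
  exact eq_inv_of_mul_eq_one_right h

theorem sq_mul_integral_rpow_mul_log (s : ℝ) {t : ℝ} (ht : 0 < t) :
    s ^ 2 * ∫ x in 1..t, x ^ (-s - 1) * Real.log x =
      Real.log t ^ 2 * ∫ σ in 0..s, σ * t ^ (-σ) := by
  have hpos : ∀ x ∈ uIcc 1 t, x ≠ 0 := fun x hx ↦ ((lt_min one_pos ht).trans_le hx.1).ne'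
  calc s ^ 2 * ∫ x in 1..t, x ^ (-s - 1) * Real.log x
      = 1 - gammaTwoLog s t := by
        rw [← intervalIntegral.integral_const_mul, intervalIntegral.integral_eq_sub_of_hasDerivAt
          (fun x hx ↦ hasDerivAt_neg_gammaTwoLog_right s (hpos x hx)), gammaTwoLog_one_right]
        · ring
        · exact (continuousOn_const.mul ((continuousOn_id.rpow_const fun x hx ↦
            .inl (hpos x hx)).mul (continuousOn_id.log hpos))).intervalIntegrable
    _ = Real.log t ^ 2 * ∫ σ in 0..s, σ * t ^ (-σ) := by
        rw [← intervalIntegral.integral_const_mul, intervalIntegral.integral_eq_sub_of_hasDerivAt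
          (fun σ _ ↦ hasDerivAt_neg_gammaTwoLog_left σ ht), gammaTwoLog_zero_left]
        · ring
        · exact (continuous_const.mul (continuous_id.mul
            (continuous_const.rpow continuous_neg fun _ ↦ .inl ht.ne'))).intervalIntegrable _ _

end LogarithmicKernel

section TriangularFubini

variable {α E : Type*} [LinearOrder α] [TopologicalSpace α] [OrderClosedTopology α]
  [MeasurableSpace α] [OpensMeasurableSpace α] [NormedAddCommGroup E] [NormedSpace ℝ E]
  {μ ν : Measure α} {a : α → ℝ} {g : α → E} {c : α}

theorem setIntegral_Ioi_indicator_Iio {t : α} (f : α → E) :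
    ∫ x in Ioi c, (Iio t).indicator f x ∂μ = ∫ x in Ioo c t, f x ∂μ := by
  rw [setIntegral_indicator measurableSet_Iio, Ioi_inter_Iio]

variable [SecondCountableTopology α] [SFinite μ] [SFinite ν]

theorem integrable_indicator_lt_smul (ha : AEStronglyMeasurable a (μ.restrict (Ioi c)))
    (hg : AEStronglyMeasurable g (ν.restrict (Ioi c)))
    (ha_int : ∀ t > c, IntegrableOn a (Ioo c t) μ)
    (hag_int : IntegrableOn (fun t ↦ (∫ x in Ioo c t, ‖a x‖ ∂μ) • g t) (Ioi c) ν) :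
    Integrable ({p : α × α | p.1 < p.2}.indicator fun p ↦ a p.1 • g p.2)
      ((μ.restrict (Ioi c)).prod (ν.restrict (Ioi c))) := by
  have hmeas : AEStronglyMeasurable ({p : α × α | p.1 < p.2}.indicator fun p ↦ a p.1 • g p.2)
      ((μ.restrict (Ioi c)).prod (ν.restrict (Ioi c))) :=
    (ha.comp_fst.smul hg.comp_snd).indicator (measurableSet_lt measurable_fst measurable_snd)
  refine (integrable_prod_iff' hmeas).2 ⟨?_, ?_⟩
  · refine (ae_restrict_iff' measurableSet_Ioi).2 (.of_forall fun t ht ↦ ?_)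
    refine (integrable_indicator_iff measurableSet_Iio).2 (?_ : IntegrableOn _ (Iio t) _)
    rw [IntegrableOn, Measure.restrict_restrict measurableSet_Iio, Iio_inter_Ioi]
    exact (ha_int t ht).smul_const (g t)
  · refine hag_int.norm.congr (.of_forall fun t ↦ ?_)
    have hslice : ∀ x, ‖{p : α × α | p.1 < p.2}.indicator (fun p ↦ a p.1 • g p.2) (x, t)‖ =
        (Iio t).indicator (fun x ↦ ‖a x‖ * ‖g t‖) x := fun x ↦ by
      rw [norm_indicator_eq_indicator_norm]
      simp only [norm_smul]
      rfl
    simp only [hslice]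
    rw [setIntegral_Ioi_indicator_Iio, integral_mul_const, norm_smul,
      Real.norm_of_nonneg (integral_nonneg fun _ ↦ norm_nonneg _)]

theorem integral_Ioi_smul_integral_Ioi [CompleteSpace E]
    (ha : AEStronglyMeasurable a (μ.restrict (Ioi c)))
    (hg : AEStronglyMeasurable g (ν.restrict (Ioi c)))
    (ha_int : ∀ t > c, IntegrableOn a (Ioo c t) μ)
    (hag_int : IntegrableOn (fun t ↦ (∫ x in Ioo c t, ‖a x‖ ∂μ) • g t) (Ioi c) ν) :
    ∫ x in Ioi c, a x • ∫ t in Ioi x, g t ∂ν ∂μ =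
      ∫ t in Ioi c, (∫ x in Ioo c t, a x ∂μ) • g t ∂ν := by
  let F : α → α → E := fun x t ↦ {p : α × α | p.1 < p.2}.indicator (fun p ↦ a p.1 • g p.2) (x, t)
  calc ∫ x in Ioi c, a x • ∫ t in Ioi x, g t ∂ν ∂μ
      = ∫ x in Ioi c, ∫ t in Ioi c, F x t ∂ν ∂μ := by
        refine setIntegral_congr_fun measurableSet_Ioi fun x hx ↦ ?_
        change _ = ∫ t in Ioi c, (Ioi x).indicator (fun t ↦ a x • g t) t ∂ν
        rw [setIntegral_indicator measurableSet_Ioi,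
          inter_eq_right.2 (Ioi_subset_Ioi (le_of_lt hx)), integral_smul]
    _ = ∫ t in Ioi c, ∫ x in Ioi c, F x t ∂μ ∂ν :=
        integral_integral_swap (integrable_indicator_lt_smul ha hg ha_int hag_int)
    _ = ∫ t in Ioi c, (∫ x in Ioo c t, a x ∂μ) • g t ∂ν := by
        congr 1 with t
        change ∫ x in Ioi c, (Iio t).indicator (fun x ↦ a x • g t) x ∂μ = _
        rw [setIntegral_Ioi_indicator_Iio, integral_smul_const]

end TriangularFubini

section IteratedIntegral

variable {E : Type*} [NormedAddCommGroup E] [NormedSpace ℝ E] {f : ℝ → E} {C : ℝ}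

theorem integrableOn_Ioi_one_rpow_neg_sub_one {s : ℝ} (hs : 0 < s) :
    IntegrableOn (fun t : ℝ ↦ t ^ (-s - 1)) (Ioi 1) :=
  integrableOn_Ioi_rpow_of_lt (by linarith) one_pos

theorem integral_Ioi_one_rpow_neg_sub_one {s : ℝ} (hs : 0 < s) :
    ∫ t in Ioi (1 : ℝ), t ^ (-s - 1) = s⁻¹ := by
  rw [integral_Ioi_rpow_of_lt (by linarith) one_pos, Real.one_rpow, sub_add_cancel, neg_div_neg_eq,
    one_div]

theorem integrable_prod_mul_rpow (s : ℝ) :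
    Integrable (fun p : ℝ × ℝ ↦ p.1 * p.2 ^ (-p.1 - 1))
      ((volume.restrict (Ioc 0 s)).prod (volume.restrict (Ioi 1))) := by
  have hmeas : Measurable fun p : ℝ × ℝ ↦ p.1 * p.2 ^ (-p.1 - 1) := by fun_prop
  refine (integrable_prod_iff hmeas.aestronglyMeasurable).2 ⟨?_, ?_⟩
  · refine (ae_restrict_iff' measurableSet_Ioc).2 (.of_forall fun σ hσ ↦ ?_)
    exact (integrableOn_Ioi_one_rpow_neg_sub_one hσ.1).const_mul σ
  · refine (integrableOn_const (C := (1 : ℝ)) (by simp)).congr ?_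
    refine (ae_restrict_iff' measurableSet_Ioc).2 (.of_forall fun σ hσ ↦ Eq.symm ?_)
    calc ∫ t in Ioi (1 : ℝ), ‖σ * t ^ (-σ - 1)‖
        = ∫ t in Ioi (1 : ℝ), σ * t ^ (-σ - 1) :=
          setIntegral_congr_fun measurableSet_Ioi fun t ht ↦ Real.norm_of_nonneg
            (mul_nonneg hσ.1.le (Real.rpow_nonneg (zero_lt_one.trans ht).le _))
      _ = 1 := by
          rw [integral_const_mul, integral_Ioi_one_rpow_neg_sub_one hσ.1,
            mul_inv_cancel₀ hσ.1.ne']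

theorem integrable_prod_mul_rpow_smul (hf : AEStronglyMeasurable f (volume.restrict (Ioi 1)))
    (hC : ∀ t, 1 < t → ‖f t‖ ≤ C) (s : ℝ) :
    Integrable (fun p : ℝ × ℝ ↦ (p.1 * p.2 ^ (-p.1 - 1)) • f p.2)
      ((volume.restrict (Ioc 0 s)).prod (volume.restrict (Ioi 1))) := by
  refine (integrable_prod_mul_rpow s).smul_of_top_left (memLp_top_of_bound hf.comp_snd C ?_)
  exact Measure.quasiMeasurePreserving_snd.ae
    ((ae_restrict_iff' measurableSet_Ioi).2 (.of_forall hC))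

theorem sq_mul_integral_rpow_mul_log_mul_inv {s t : ℝ} (ht : 1 < t) :
    s ^ 2 * ((∫ x in 1..t, x ^ (-s - 1) * Real.log x) * (t * Real.log t ^ 2)⁻¹) =
      ∫ σ in 0..s, σ * t ^ (-σ - 1) := by
  have ht0 : 0 < t := one_pos.trans ht
  have hlog : Real.log t ≠ 0 := (Real.log_pos ht).ne'
  rw [← mul_assoc, sq_mul_integral_rpow_mul_log s ht0]
  simp only [Real.rpow_sub_one ht0.ne', ← mul_div_assoc]
  rw [intervalIntegral.integral_div]
  field_simp

theorem sq_smul_integral_Ioo_rpow_mul_log_smul [CompleteSpace E] {s t : ℝ} (ht : 1 < t) (v : E) :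
    s ^ 2 • (∫ x in Ioo 1 t, x ^ (-s - 1) * Real.log x) • (t * Real.log t ^ 2)⁻¹ • v =
      ∫ σ in 0..s, (σ * t ^ (-σ - 1)) • v := by
  rw [← integral_Ioc_eq_integral_Ioo, ← intervalIntegral.integral_of_le ht.le,
    intervalIntegral.integral_smul_const, ← sq_mul_integral_rpow_mul_log_mul_inv ht, smul_smul,
    smul_smul, mul_assoc]

theorem integrableOn_integral_norm_rpow_mul_log_smul [CompleteSpace E]
    (hf : AEStronglyMeasurable f (volume.restrict (Ioi 1)))
    (hC : ∀ t, 1 < t → ‖f t‖ ≤ C) {s : ℝ} (hs : 0 < s) :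
    IntegrableOn (fun t ↦ (∫ x in Ioo 1 t, ‖x ^ (-s - 1) * Real.log x‖) •
      (t * Real.log t ^ 2)⁻¹ • f t) (Ioi 1) := by
  refine IntegrableOn.congr_fun
    ((integrable_prod_mul_rpow_smul hf hC s).integral_prod_right.smul (s ^ 2)⁻¹) (fun t ht ↦ ?_)
    measurableSet_Ioi
  have hnorm : ∫ x in Ioo 1 t, ‖x ^ (-s - 1) * Real.log x‖ =
      ∫ x in Ioo 1 t, x ^ (-s - 1) * Real.log x :=
    setIntegral_congr_fun measurableSet_Ioo fun x hx ↦
      Real.norm_of_nonneg (rpow_mul_log_nonneg hx.1.le _)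
  simp only [Pi.smul_apply]
  rw [← intervalIntegral.integral_of_le hs.le,
    ← sq_smul_integral_Ioo_rpow_mul_log_smul ht, hnorm,
    inv_smul_smul₀ (pow_ne_zero 2 hs.ne')]

theorem sq_smul_integral_rpow_mul_log_smul_integral_Ioi [CompleteSpace E]
    (hf : AEStronglyMeasurable f (volume.restrict (Ioi 1)))
    (hC : ∀ t, 1 < t → ‖f t‖ ≤ C) {s : ℝ} (hs : 0 < s) :
    s ^ 2 • ∫ x in Ioi 1, (x ^ (-s - 1) * Real.log x) •
        ∫ t in Ioi x, (t * Real.log t ^ 2)⁻¹ • f t =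
      ∫ σ in 0..s, σ • ∫ t in Ioi 1, t ^ (-σ - 1) • f t := by
  have hlog_int := integrableOn_Ioi_one_rpow_mul_log hs
  have hweight : AEStronglyMeasurable (fun t ↦ (t * Real.log t ^ 2)⁻¹ • f t)
      (volume.restrict (Ioi 1)) :=
    (by fun_prop : Measurable fun t ↦ (t * Real.log t ^ 2)⁻¹).aestronglyMeasurable.smul hf
  have hiterated_int := integrableOn_integral_norm_rpow_mul_log_smul hf hC hs
  calc s ^ 2 • ∫ x in Ioi 1, (x ^ (-s - 1) * Real.log x) •
        ∫ t in Ioi x, (t * Real.log t ^ 2)⁻¹ • f t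
      = ∫ t in Ioi 1, s ^ 2 • (∫ x in Ioo 1 t, x ^ (-s - 1) * Real.log x) •
          (t * Real.log t ^ 2)⁻¹ • f t := by
        rw [integral_smul, integral_Ioi_smul_integral_Ioi hlog_int.aestronglyMeasurable hweight
          (fun t _ ↦ hlog_int.mono_set Ioo_subset_Ioi_self) hiterated_int]
    _ = ∫ t in Ioi 1, ∫ σ in 0..s, (σ * t ^ (-σ - 1)) • f t :=
        setIntegral_congr_fun measurableSet_Ioi fun t ht ↦
          sq_smul_integral_Ioo_rpow_mul_log_smul ht (f t)
    _ = ∫ σ in 0..s, ∫ t in Ioi 1, (σ * t ^ (-σ - 1)) • f t :=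
        (intervalIntegral_integral_swap
          (by rw [uIoc_of_le hs.le]; exact integrable_prod_mul_rpow_smul hf hC s)).symm
    _ = ∫ σ in 0..s, σ • ∫ t in Ioi 1, t ^ (-σ - 1) • f t := by
        simp only [mul_smul, integral_smul]

end IteratedIntegral

section RiemannZetaOne

theorem riemannZeta₁_eq_sub_one_mul {s : ℂ} (hs : s ≠ 1) :
    riemannZeta₁ s = (s - 1) * riemannZeta s := by
  rw [riemannZeta_eq_inv_sub_mul hs, mul_inv_cancel_left₀ (sub_ne_zero.2 hs)]

theorem logDeriv_riemannZeta_eq {s : ℂ} (hs : s ≠ 1) (hζ : riemannZeta s ≠ 0) :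
    logDeriv riemannZeta s = logDeriv riemannZeta₁ s - (s - 1)⁻¹ := by
  have hs' : s - 1 ≠ 0 := sub_ne_zero.2 hs
  have hζ₁ : riemannZeta₁ s ≠ 0 := by
    rw [riemannZeta₁_eq_sub_one_mul hs]
    exact mul_ne_zero hs' hζ
  rw [logDeriv_apply, logDeriv_apply, deriv_riemannZeta_eq_neg_inv_sub_sq_mul_add hs,
    riemannZeta_eq_inv_sub_mul hs]
  field_simp
  ring

theorem riemannZeta₁_ofReal_mem_slitPlane {x : ℝ} (hx : 1 ≤ x) :
    riemannZeta₁ x ∈ Complex.slitPlane := by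
  rcases hx.eq_or_lt with rfl | hx
  · simp
  rw [riemannZeta₁_eq_sub_one_mul (by exact_mod_cast hx.ne'), ← Complex.ofReal_one,
    ← Complex.ofReal_sub, Complex.mem_slitPlane_iff, Complex.re_ofReal_mul]
  exact .inl (mul_pos (sub_pos.2 hx) (riemannZeta_re_pos_of_one_lt hx))

theorem riemannZeta₁_one_add_ofReal_mem_slitPlane {s : ℝ} (hs : 0 ≤ s) :
    riemannZeta₁ (1 + s) ∈ Complex.slitPlane := by
  simpa using riemannZeta₁_ofReal_mem_slitPlane (le_add_of_nonneg_right hs)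

theorem log_mul_riemannZeta_div {s : ℝ} (hs : 0 < s) :
    Complex.log (s * riemannZeta (s + 1) / (s + 1)) =
      Complex.log (riemannZeta₁ (1 + s)) - Complex.log (1 + s) := by
  have hζ₁ : riemannZeta₁ (1 + s) = s * riemannZeta (s + 1) := by
    rw [riemannZeta₁_eq_sub_one_mul (by simpa using hs.ne'), add_sub_cancel_left, add_comm]
  have hne := Complex.slitPlane_ne_zero (riemannZeta₁_one_add_ofReal_mem_slitPlane hs.le)
  have hpos : 0 < 1 + s := by positivity
  rw [← hζ₁, add_comm (s : ℂ) 1, div_eq_mul_inv, mul_comm, ← Complex.ofReal_one,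
    ← Complex.ofReal_add, ← Complex.ofReal_inv, Complex.log_ofReal_mul (inv_pos.2 hpos)
    (by simpa using hne), Real.log_inv, Complex.ofReal_neg, Complex.ofReal_log hpos.le]
  ring

theorem continuousOn_logDeriv {f : ℂ → ℂ} (hf : Differentiable ℂ f) :
    ContinuousOn (logDeriv f) {z | f z ≠ 0} :=
  hf.deriv.continuous.continuousOn.div hf.continuous.continuousOn fun _ ↦ id

theorem integral_logDeriv_eq_log_sub_log {f : ℂ → ℂ} (hf : Differentiable ℂ f) {a b : ℝ}
    (hslit : ∀ x ∈ uIcc a b, f x ∈ Complex.slitPlane) :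
    ∫ x in a..b, logDeriv f x = Complex.log (f b) - Complex.log (f a) := by
  refine intervalIntegral.integral_eq_sub_of_hasDerivAt
    (f := fun x : ℝ ↦ Complex.log (f x)) (fun x hx ↦ ?_) (ContinuousOn.intervalIntegrable ?_)
  · exact ((hf x).hasDerivAt.clog (hslit x hx)).comp_ofReal
  · exact (continuousOn_logDeriv hf).comp Complex.continuous_ofReal.continuousOn
      fun x hx ↦ Complex.slitPlane_ne_zero (hslit x hx)

theorem intervalIntegrable_logDeriv_riemannZeta₁_one_add {s : ℝ} (hs : 0 ≤ s) :
    IntervalIntegrable (fun σ : ℝ ↦ logDeriv riemannZeta₁ (1 + σ)) volume 0 s := by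
  refine ((continuousOn_logDeriv differentiable_riemannZeta₁).comp
    (f := fun σ : ℝ ↦ 1 + (σ : ℂ)) (by fun_prop) fun σ hσ ↦ ?_).intervalIntegrable
  rw [uIcc_of_le hs] at hσ
  exact Complex.slitPlane_ne_zero (riemannZeta₁_one_add_ofReal_mem_slitPlane hσ.1)

theorem integral_logDeriv_riemannZeta₁_one_add {s : ℝ} (hs : 0 ≤ s) :
    ∫ σ in (0 : ℝ)..s, logDeriv riemannZeta₁ (1 + σ) = Complex.log (riemannZeta₁ (1 + s)) := by
  have hshift := intervalIntegral.integral_comp_add_left (a := 0) (b := s)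
    (fun x : ℝ ↦ logDeriv riemannZeta₁ x) 1
  have hlog := integral_logDeriv_eq_log_sub_log differentiable_riemannZeta₁ (a := 1) (b := 1 + s)
    fun x hx ↦ riemannZeta₁_ofReal_mem_slitPlane
      (by rw [uIcc_of_le (le_add_of_nonneg_right hs)] at hx; exact hx.1)
  rw [add_zero, hlog] at hshift
  simpa using hshift

end RiemannZetaOne

section MellinTransform

theorem LSeries_div_natCast (f : ℕ → ℂ) (s : ℂ) :
    LSeries (fun n ↦ f n / n) s = LSeries f (s + 1) := by
  refine tsum_congr fun n ↦ ?_
  rcases eq_or_ne n 0 with rfl | hn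
  · simp
  · have hn' : (n : ℂ) ≠ 0 := Nat.cast_ne_zero.2 hn
    rw [LSeries.term_of_ne_zero hn, LSeries.term_of_ne_zero hn, Complex.cpow_add _ _ hn',
      Complex.cpow_one, div_div, mul_comm (n : ℂ)]

theorem sum_vonMangoldt_div_isBigO_rpow {r : ℝ} (hr : 0 < r) :
    (fun N : ℕ ↦ ∑ n ∈ Finset.Icc 1 N, vonMangoldt n / n) =O[atTop] fun N ↦ (N : ℝ) ^ r := by
  have hlog : (fun x : ℝ ↦ Real.log x + (Real.log 4 + 4)) =O[atTop] fun x ↦ x ^ r :=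
    (isLittleO_log_rpow_atTop hr).isBigO.add
      (isLittleO_const_left.2 (.inr (tendsto_norm_atTop_atTop.comp
        (tendsto_rpow_atTop hr)))).isBigO
  refine .trans (.of_norm_eventuallyLE ?_) (hlog.comp_tendsto tendsto_natCast_atTop_atTop)
  filter_upwards [eventually_ne_atTop 0] with N hN
  rw [Real.norm_of_nonneg
    (Finset.sum_nonneg fun n _ ↦ div_nonneg vonMangoldt_nonneg n.cast_nonneg)]
  exact sum_vonMangoldt_div_le hN

theorem LSeries_vonMangoldt_eq_integral {s : ℝ} (hs : 0 < s) :
    LSeries (fun n ↦ vonMangoldt n) (s + 1) = (s * ∫ t in Ioi (1 : ℝ),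
      t ^ (-s - 1) * ∑ n ∈ Finset.Icc 1 ⌊t⌋₊, vonMangoldt n / n : ℝ) := by
  have hpartial := LSeries_eq_mul_integral_of_nonneg (fun n ↦ vonMangoldt n / (n : ℝ))
    (half_pos hs).le (s := s) (by simpa using half_lt_self hs)
    (sum_vonMangoldt_div_isBigO_rpow (half_pos hs))
    fun n ↦ div_nonneg vonMangoldt_nonneg n.cast_nonneg
  rw [← LSeries_div_natCast, Complex.ofReal_mul, ← integral_complex_ofReal]
  simp only [Complex.ofReal_div, Complex.ofReal_natCast] at hpartial
  rw [hpartial]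
  congr 1
  refine setIntegral_congr_fun measurableSet_Ioi fun t ht ↦ ?_
  simp only [Complex.ofReal_mul, Complex.ofReal_sum, Complex.ofReal_cpow (zero_lt_one.trans ht).le]
  push_cast
  ring_nf

theorem integrableOn_Ioi_one_rpow_mul_Rfun {s : ℝ} (hs : 0 < s) :
    IntegrableOn (fun t ↦ t ^ (-s - 1) * Rfun t) (Ioi 1) := by
  obtain ⟨C, hC⟩ := exists_abs_Rfun_le
  refine (integrableOn_Ioi_one_rpow_neg_sub_one hs).mul_bdd (c := C)
    measurable_Rfun.aestronglyMeasurable ?_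
  exact (ae_restrict_iff' measurableSet_Ioi).2 (.of_forall fun t ht ↦ hC t (le_of_lt ht))

theorem integral_Ioi_one_rpow_mul_sum_vonMangoldt_div {s : ℝ} (hs : 0 < s) :
    ∫ t in Ioi (1 : ℝ), t ^ (-s - 1) * ∑ n ∈ Finset.Icc 1 ⌊t⌋₊, vonMangoldt n / n =
      (∫ t in Ioi 1, t ^ (-s - 1) * Rfun t) + (s ^ 2)⁻¹ -
        s⁻¹ * Real.eulerMascheroniConstant := by
  have hR := integrableOn_Ioi_one_rpow_mul_Rfun hs
  have hlog := integrableOn_Ioi_one_rpow_mul_log hs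
  have hconst := (integrableOn_Ioi_one_rpow_neg_sub_one hs).mul_const Real.eulerMascheroniConstant
  rw [← integral_Ioi_one_rpow_mul_log hs, ← integral_Ioi_one_rpow_neg_sub_one hs,
    ← integral_mul_const, ← integral_add hR hlog, ← integral_sub (by exact hR.add hlog) hconst]
  congr 1 with t
  rw [Rfun]
  ring

theorem mul_integral_Ioi_one_rpow_mul_Rfun {s : ℝ} (hs : 0 < s) :
    ((s * ∫ t in Ioi 1, t ^ (-s - 1) * Rfun t : ℝ) : ℂ) =
      Real.eulerMascheroniConstant - logDeriv riemannZeta₁ (1 + s) := by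
  have hsC : (s : ℂ) ≠ 0 := Complex.ofReal_ne_zero.2 hs.ne'
  have hre : 1 < ((s : ℂ) + 1).re := by simpa using hs
  have hmellin := LSeries_vonMangoldt_eq_integral hs
  rw [ArithmeticFunction.LSeries_vonMangoldt_eq_deriv_riemannZeta_div hre, neg_div,
    ← logDeriv_apply, logDeriv_riemannZeta_eq (by simpa using hsC)
      (riemannZeta_ne_zero_of_one_lt_re hre),
    integral_Ioi_one_rpow_mul_sum_vonMangoldt_div hs, add_sub_cancel_right, add_comm] at hmellin
  push_cast at hmellin ⊢
  field_simp at hmellin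
  refine mul_left_cancel₀ hsC ?_
  linear_combination -hmellin

theorem sq_mul_integral_Ioi_one_rpow_mul_Hfun_mul_log {s : ℝ} (hs : 0 < s) :
    ((s ^ 2 * ∫ x in Ioi 1, x ^ (-s - 1) * Hfun x * Real.log x : ℝ) : ℂ) =
      Real.eulerMascheroniConstant * s - Complex.log (riemannZeta₁ (1 + s)) := by
  obtain ⟨C, hC⟩ := exists_abs_Rfun_le
  have hfubini := sq_smul_integral_rpow_mul_log_smul_integral_Ioi
    measurable_Rfun.aestronglyMeasurable (fun t ht ↦ hC t (le_of_lt ht)) hs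
  calc ((s ^ 2 * ∫ x in Ioi 1, x ^ (-s - 1) * Hfun x * Real.log x : ℝ) : ℂ)
      = (∫ σ in 0..s, σ * ∫ t in Ioi 1, t ^ (-σ - 1) * Rfun t : ℝ) := by
        simp only [smul_eq_mul] at hfubini
        rw [← hfubini]
        congr! 4 with x
        simp only [Hfun, div_eq_inv_mul]
        ring
    _ = ∫ σ in (0 : ℝ)..s,
          ((Real.eulerMascheroniConstant : ℂ) - logDeriv riemannZeta₁ (1 + σ)) := by
        rw [← intervalIntegral.integral_ofReal, intervalIntegral.integral_of_le hs.le,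
          intervalIntegral.integral_of_le hs.le]
        exact setIntegral_congr_fun measurableSet_Ioc fun σ hσ ↦
          mul_integral_Ioi_one_rpow_mul_Rfun hσ.1
    _ = Real.eulerMascheroniConstant * s - Complex.log (riemannZeta₁ (1 + s)) := by
        rw [intervalIntegral.integral_sub intervalIntegrable_const
          (intervalIntegrable_logDeriv_riemannZeta₁_one_add hs.le),
          integral_logDeriv_riemannZeta₁_one_add hs.le, intervalIntegral.integral_const, sub_zero,
          Complex.real_smul, mul_comm]

end MellinTransform

/-- There is a function `G`, analytic on `{Re s > -1}`, such that for real `s > 0`,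
`∫_1^∞ x^{-s-1} H(x) log x dx = -(1/s^2) log(s ζ(s+1)/(s+1)) - (1-γ)/s + G(s)`.
(The quantity `s ζ(s+1)/(s+1)` is a positive real number for real `s > 0`, so its
complex logarithm coincides with the real logarithm.) -/
theorem mellin_Hfun_log :
    ∃ G : ℂ → ℂ, AnalyticOn ℂ G {z : ℂ | -1 < z.re} ∧
      ∀ s : ℝ, 0 < s →
        ((∫ x in Set.Ioi (1 : ℝ), x ^ (-s - 1) * Hfun x * Real.log x : ℝ) : ℂ) =
          -(1 / (s : ℂ) ^ 2) * Complex.log ((s : ℂ) * riemannZeta (s + 1) / ((s : ℂ) + 1)) -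
            (1 - (Real.eulerMascheroniConstant : ℂ)) / (s : ℂ) + G s := by
  refine ⟨fun z ↦ -dslope (dslope (fun z ↦ Complex.log (1 + z)) 0) 0 z,
    analyticOn_dslope_dslope_log_one_add.neg, fun s hs ↦ ?_⟩
  have hsC : (s : ℂ) ≠ 0 := Complex.ofReal_ne_zero.2 hs.ne'
  have hmellin := sq_mul_integral_Ioi_one_rpow_mul_Hfun_mul_log hs
  rw [Complex.ofReal_mul, Complex.ofReal_pow] at hmellin
  simp only [log_mul_riemannZeta_div hs, dslope_dslope_of_ne _ hsC, deriv_log_one_add_zero,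
    sub_zero, add_zero, Complex.log_one, smul_eq_mul]
  field_simp
  linear_combination hmellin
end
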